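/- Suppose there exist real numbers θ > 1, σ > 1 and r₀ > 0 such that ∫_1^∞ (g_θ(t)·t)^{−1/p} dt < ∞, ∫_1^∞ g_θ(t)^{−1/α} dt < ∞, and ∫_{r₀}^∞ (r·f_σ(r))^{1/(p−1)} dr = ∞. Then every nonnegative C¹ solution u of the differential inequality div A(x,Du) + b(x)|Du|^α ≥ q(x)g(u) in ℝⁿ is identically zero. -/

import Mathlib

open MeasureTheory Metric Set Filter
open scoped RealInnerProductSpace ENNReal

noncomputable section

abbrev Euc (n : ℕ) := EuclideanSpace ℝ (Fin n)

/-- Weak solution of `div A(x,Dv) + b(x)|Dv|^α ≥ a(x)` on an open set `U`: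
for every nonnegative test function `φ ∈ C₀^∞(U)`,
`-∫ A(x,Dv)·Dφ + ∫ b |Dv|^α φ ≥ ∫ a φ`. -/
def IsWeakSol {n : ℕ} (A : Euc n → Euc n → Euc n) (b : Euc n → ℝ) (α : ℝ)
    (a : Euc n → ℝ) (U : Set (Euc n)) (v : Euc n → ℝ) : Prop :=
  ∀ φ : Euc n → ℝ, ContDiff ℝ (⊤ : ℕ∞) φ → HasCompactSupport φ → tsupport φ ⊆ U →
    (∀ x, 0 ≤ φ x) →
    (∫ x in U, a x * φ x) ≤
      (-(∫ x in U, ⟪A x (gradient v x), gradient φ x⟫)) +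
        ∫ x in U, b x * ‖gradient v x‖ ^ α * φ x

/-- Structural conditions on `A`: measurability, coercivity and growth. -/
def StructCond {n : ℕ} (A : Euc n → Euc n → Euc n) (p C₁ C₂ : ℝ) : Prop :=
  Measurable (Function.uncurry A) ∧
    ∀ x ζ : Euc n, C₁ * ‖ζ‖ ^ p ≤ ⟪ζ, A x ζ⟫ ∧ ‖A x ζ‖ ≤ C₂ * ‖ζ‖ ^ (p - 1)

/-- Locally bounded function on `ℝⁿ`. -/
def LocBdd {n : ℕ} (b : Euc n → ℝ) : Prop :=
  ∀ K : Set (Euc n), IsCompact K → ∃ C, ∀ x ∈ K, b x ≤ C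

/-- `M(r; u) = max_{|x| = r} u x`. -/
def sphMax {n : ℕ} (u : Euc n → ℝ) (r : ℝ) : ℝ := sSup (u '' Metric.sphere (0 : Euc n) r)

/-- `g_θ(t) = inf_{s ∈ (t/θ, θ t)} g s`. -/
def ginf (g : ℝ → ℝ) (θ t : ℝ) : ℝ := sInf (g '' Set.Ioo (t / θ) (θ * t))

/-- The open annulus `{x : r₁ < |x| < r₂}`. -/
def Ann (n : ℕ) (r₁ r₂ : ℝ) : Set (Euc n) := {x : Euc n | r₁ < ‖x‖ ∧ ‖x‖ < r₂}

/-- `q_σ(r) = ess inf_{r/σ < |x| < σ r} q x`. -/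
def qinf {n : ℕ} (q : Euc n → ℝ) (σ r : ℝ) : ℝ :=
  essInf q (volume.restrict (Ann n (r / σ) (σ * r)))

/-- `f_σ(r) = q_σ(r) / (1 + r q_σ(r)^{(α-p+1)/α} ess sup_{r/σ<|x|<σr} b^{(p-1)/α})`. -/
def fdef {n : ℕ} (q b : Euc n → ℝ) (p α σ r : ℝ) : ℝ :=
  qinf q σ r /
    (1 + r * qinf q σ r ^ ((α - p + 1) / α) *
      essSup (fun x => b x ^ ((p - 1) / α)) (volume.restrict (Ann n (r / σ) (σ * r))))

open scoped Convolution in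
lemma approx_smooth {n : ℕ} (φ : Euc n → ℝ) (hφ : ContDiff ℝ 1 φ) (hc : HasCompactSupport φ)
    (h0 : ∀ x, 0 ≤ φ x) {ε : ℝ} (hε : 0 < ε) :
    ∃ ψ : Euc n → ℝ, ContDiff ℝ (⊤ : ℕ∞) ψ ∧ HasCompactSupport ψ ∧ (∀ x, 0 ≤ ψ x) ∧
      (∀ x, x ∉ cthickening 1 (tsupport φ) → ψ x = 0) ∧
      (∀ x, |ψ x - φ x| ≤ ε) ∧ (∀ x, ‖gradient ψ x - gradient φ x‖ ≤ ε) := by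
  have hu1 : UniformContinuous φ := hc.uniformContinuous_of_continuous hφ.continuous
  have hcd : Continuous (fderiv ℝ φ) := hφ.continuous_fderiv one_ne_zero
  have hu2 : UniformContinuous (fderiv ℝ φ) := (hc.fderiv ℝ).uniformContinuous_of_continuous hcd
  obtain ⟨d1, hd1, H1⟩ := Metric.uniformContinuous_iff.1 hu1 ε hε
  obtain ⟨d2, hd2, H2⟩ := Metric.uniformContinuous_iff.1 hu2 ε hε
  set d := min 1 (min d1 d2) with hd
  have hdpos : 0 < d := by positivity
  let η : ContDiffBump (0 : Euc n) := ⟨d / 2, d, by positivity, by linarith⟩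
  have hrout : η.rOut = d := rfl
  set ψ : Euc n → ℝ := (η.normed volume ⋆[ContinuousLinearMap.lsmul ℝ ℝ, volume] φ) with hψ
  have hli : LocallyIntegrable φ volume := hφ.continuous.locallyIntegrable
  have hsm : ContDiff ℝ (⊤ : ℕ∞) ψ :=
    η.hasCompactSupport_normed.contDiff_convolution_left _ η.contDiff_normed hli
  have hz : ∀ x, x ∉ cthickening 1 (tsupport φ) → ψ x = 0 := by
    intro x hx
    have key : ∀ y ∈ ball x η.rOut, φ y = 0 := by
      intro y hy
      by_contra hne
      apply hx
      have hy' : y ∈ tsupport φ := subset_tsupport _ hne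
      apply mem_cthickening_of_dist_le x y 1 _ hy'
      rw [hrout, mem_ball, dist_comm] at hy
      exact hy.le.trans (min_le_left _ _)
    have hx0 : φ x = 0 := key x (mem_ball_self η.rOut_pos)
    have := η.dist_normed_convolution_le (x₀ := x) (ε := 0) (g := φ) (μ := volume)
      hli.aestronglyMeasurable (by intro y hy; rw [key y hy, hx0]; simp)
    rw [hx0] at this
    simpa using le_antisymm this dist_nonneg
  have hK : IsCompact (cthickening 1 (tsupport φ)) := hc.isCompact.cthickening
  refine ⟨ψ, hsm, HasCompactSupport.intro hK hz, ?_, hz, ?_, ?_⟩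
  · intro x
    rw [hψ, convolution_def]
    apply integral_nonneg
    intro t
    simp only [ContinuousLinearMap.lsmul_apply, smul_eq_mul, Pi.zero_apply]
    exact mul_nonneg (η.nonneg_normed _) (h0 _)
  · intro x
    have := η.dist_normed_convolution_le (x₀ := x) (ε := ε) (g := φ) (μ := volume)
      hli.aestronglyMeasurable (by
        intro y hy
        refine (H1 (lt_of_lt_of_le (mem_ball.1 hy) ?_)).le
        rw [hrout]; exact (min_le_right _ _).trans (min_le_left _ _))
    simpa [Real.dist_eq] using this
  · intro x
    have hfd := hc.hasFDerivAt_convolution_right (ContinuousLinearMap.lsmul ℝ ℝ) (μ := volume)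
      (f := η.normed volume) (η.continuous_normed.locallyIntegrable) hφ x
    have heq : (η.normed volume ⋆[(ContinuousLinearMap.lsmul ℝ ℝ : ℝ →L[ℝ] ℝ →L[ℝ] ℝ).precompR (Euc n), volume] fderiv ℝ φ) x
       = (η.normed volume ⋆[ContinuousLinearMap.lsmul ℝ ℝ, volume] fderiv ℝ φ) x := by
      rw [convolution_def, convolution_def]
      congr 1
      
    have := η.dist_normed_convolution_le (x₀ := x) (ε := ε) (g := fderiv ℝ φ) (μ := volume)
      hcd.aestronglyMeasurable (by
        intro y hy
        refine (H2 (lt_of_lt_of_le (mem_ball.1 hy) ?_)).le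
        rw [hrout]; exact (min_le_right _ _).trans (min_le_right _ _))
    rw [← heq, ← hfd.fderiv, dist_eq_norm] at this
    rw [gradient, gradient, ← map_sub, LinearIsometryEquiv.norm_map]
    exact this

lemma ext_C1 {n : ℕ} (F : Euc n → Euc n) (a c : Euc n → ℝ) (hF : LocallyIntegrable F)
    (ha : LocallyIntegrable a) (hcl : LocallyIntegrable c)
    (H : ∀ φ : Euc n → ℝ, ContDiff ℝ (⊤ : ℕ∞) φ → HasCompactSupport φ → (∀ x, 0 ≤ φ x) →
      (∫ x, a x * φ x) ≤ (-(∫ x, ⟪F x, gradient φ x⟫)) + ∫ x, c x * φ x)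
    (φ : Euc n → ℝ) (hφ : ContDiff ℝ 1 φ) (hc : HasCompactSupport φ) (h0 : ∀ x, 0 ≤ φ x) :
      (∫ x, a x * φ x) ≤ (-(∫ x, ⟪F x, gradient φ x⟫)) + ∫ x, c x * φ x := by
  set K := cthickening 1 (tsupport φ) with hKdef
  have hK : IsCompact K := hc.isCompact.cthickening
  have hφK : ∀ x, x ∉ K → φ x = 0 := by
    intro x hx
    by_contra hne
    exact hx (self_subset_cthickening _ (subset_tsupport _ hne))
  have hgrad0 : ∀ (ψ : Euc n → ℝ), (∀ x, x ∉ K → ψ x = 0) → ∀ x, x ∉ K → gradient ψ x = 0 := by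
    intro ψ hψ x hx
    have : ψ =ᶠ[nhds x] fun _ => 0 := by
      filter_upwards [hK.isClosed.isOpen_compl.mem_nhds hx] with y hy using hψ y hy
    rw [gradient, this.fderiv_eq]; simp
  have hgc : ∀ (ψ : Euc n → ℝ), ContDiff ℝ 1 ψ → Continuous (gradient ψ) := by
    intro ψ hψ
    have := hψ.continuous_fderiv one_ne_zero
    exact (LinearIsometryEquiv.continuous _).comp this
  -- integrability
  have iscal : ∀ (f : Euc n → ℝ), LocallyIntegrable f → ∀ ψ : Euc n → ℝ, ContDiff ℝ 1 ψ →
      HasCompactSupport ψ → Integrable (fun x => f x * ψ x) := by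
    intro f hf ψ h1 h2
    have := hf.integrable_smul_right_of_hasCompactSupport h1.continuous h2
    simpa using this
  have ivec : ∀ ψ : Euc n → ℝ, ContDiff ℝ 1 ψ →
      HasCompactSupport ψ → Integrable (fun x => ⟪F x, gradient ψ x⟫) := by
    intro ψ h1 h2
    obtain ⟨C, hC⟩ : ∃ C, ∀ x, ‖gradient ψ x‖ ≤ C := by
      have := (h2.fderiv ℝ).exists_bound_of_continuous (h1.continuous_fderiv one_ne_zero)
      obtain ⟨C, hC⟩ := this
      exact ⟨C, fun x => by rw [gradient, LinearIsometryEquiv.norm_map]; exact hC x⟩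
    have hi : IntegrableOn (fun x => ⟪F x, gradient ψ x⟫) (tsupport ψ) := by
      have hFi : IntegrableOn F (tsupport ψ) := hF.integrableOn_isCompact h2
      refine Integrable.mono' (hFi.norm.mul_const C) ?_ ?_
      · exact hFi.aestronglyMeasurable.inner (hgc ψ h1).aestronglyMeasurable
      · filter_upwards with x
        refine (norm_inner_le_norm _ _).trans ?_
        gcongr; exact hC x
    rw [← integrableOn_iff_integrable_of_support_subset (s := tsupport ψ)]
    · exact hi
    · intro x hx
      by_contra hne
      apply hx
      have : ψ =ᶠ[nhds x] fun _ => 0 := notMem_tsupport_iff_eventuallyEq.1 hne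
      simp [gradient, this.fderiv_eq]
  -- constants
  set Ca := ∫ x in K, |a x|
  set Cc := ∫ x in K, |c x|
  set CF := ∫ x in K, ‖F x‖
  have bscal : ∀ (f : Euc n → ℝ), LocallyIntegrable f → ∀ ψ : Euc n → ℝ, ContDiff ℝ 1 ψ →
      HasCompactSupport ψ → (∀ x, x ∉ K → ψ x = 0) → ∀ ε, (∀ x, |ψ x - φ x| ≤ ε) →
      |(∫ x, f x * ψ x) - ∫ x, f x * φ x| ≤ ε * ∫ x in K, |f x| := by
    intro f hf ψ h1 h2 h3 ε h4
    rw [← integral_sub (iscal f hf ψ h1 h2) (iscal f hf φ hφ hc)]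
    have hfi : IntegrableOn f K := hf.integrableOn_isCompact hK
    rw [← setIntegral_eq_integral_of_forall_compl_eq_zero (s := K)
      (f := fun x => f x * ψ x - f x * φ x)]
    · rw [← Real.norm_eq_abs, ← integral_const_mul]
      refine norm_integral_le_of_norm_le (hfi.norm.const_mul ε) ?_
      filter_upwards with x
      rw [← mul_sub, norm_mul, mul_comm]
      exact mul_le_mul_of_nonneg_right (h4 x) (norm_nonneg _)
    · intro x hx; simp [h3 x hx, hφK x hx]
  have bvec : ∀ ψ : Euc n → ℝ, ContDiff ℝ 1 ψ →
      HasCompactSupport ψ → (∀ x, x ∉ K → ψ x = 0) → ∀ ε,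
      (∀ x, ‖gradient ψ x - gradient φ x‖ ≤ ε) →
      |(∫ x, ⟪F x, gradient ψ x⟫) - ∫ x, ⟪F x, gradient φ x⟫| ≤ ε * CF := by
    intro ψ h1 h2 h3 ε h4
    rw [← integral_sub (ivec ψ h1 h2) (ivec φ hφ hc)]
    have hfi : IntegrableOn F K := hF.integrableOn_isCompact hK
    rw [← setIntegral_eq_integral_of_forall_compl_eq_zero (s := K)
      (f := fun x => ⟪F x, gradient ψ x⟫ - ⟪F x, gradient φ x⟫)]
    · rw [← Real.norm_eq_abs, ← integral_const_mul]
      refine norm_integral_le_of_norm_le (hfi.norm.const_mul ε) ?_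
      filter_upwards with x
      rw [← inner_sub_right, mul_comm]
      refine (norm_inner_le_norm _ _).trans ?_
      have := h4 x
      gcongr
    · intro x hx; simp [hgrad0 ψ h3 x hx, hgrad0 φ hφK x hx]
  have main : ∀ ε : ℝ, 0 < ε → (∫ x, a x * φ x) ≤
      (-(∫ x, ⟪F x, gradient φ x⟫)) + (∫ x, c x * φ x) + ε * (Ca + CF + Cc) := by
    intro ε hε
    obtain ⟨ψ, p1, p2, p3, p4, p5, p6⟩ := approx_smooth φ hφ hc h0 hε
    have p1' : ContDiff ℝ 1 ψ := p1.of_le (by exact_mod_cast le_top)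
    have e1 := abs_le.1 (bscal a ha ψ p1' p2 p4 ε p5)
    have e2 := abs_le.1 (bscal c hcl ψ p1' p2 p4 ε p5)
    have e3 := abs_le.1 (bvec ψ p1' p2 p4 ε p6)
    have := H ψ p1 p2 p3
    have q : ε * (Ca + CF + Cc) = ε * Ca + ε * CF + ε * Cc := by ring
    rw [q]
    linarith [e1.1, e1.2, e2.1, e2.2, e3.1, e3.2]
  have hlim : Tendsto (fun ε : ℝ => (-(∫ x, ⟪F x, gradient φ x⟫)) + (∫ x, c x * φ x)
      + ε * (Ca + CF + Cc)) (nhdsWithin 0 (Ioi 0)) (nhds ((-(∫ x, ⟪F x, gradient φ x⟫)) +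
        (∫ x, c x * φ x) + 0 * (Ca + CF + Cc))) := by
    apply Tendsto.mono_left _ nhdsWithin_le_nhds
    exact Continuous.tendsto (by fun_prop) 0
  have := ge_of_tendsto hlim (by filter_upwards [self_mem_nhdsWithin] with ε hε using main ε hε)
  simpa using this

lemma hasDerivAt_pospow {s : ℝ} (hs : 1 < s) (t : ℝ) :
    HasDerivAt (fun t : ℝ => (max t 0) ^ s) (s * (max t 0) ^ (s - 1)) t := by
  rcases lt_trichotomy t 0 with ht | ht | ht
  · have h1 : (fun t : ℝ => (max t 0) ^ s) =ᶠ[nhds t] fun _ => 0 := by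
      filter_upwards [Iio_mem_nhds ht] with y hy
      rw [max_eq_right (le_of_lt hy), Real.zero_rpow (by linarith)]
    rw [max_eq_right ht.le, Real.zero_rpow (by linarith), mul_zero]
    exact (hasDerivAt_const t (0:ℝ)).congr_of_eventuallyEq h1
  · subst ht
    rw [max_self, Real.zero_rpow (by linarith), mul_zero]
    have h := hasDerivAt_abs_rpow 0 hs
    simp only [mul_zero] at h
    rw [hasDerivAt_iff_isLittleO] at h ⊢
    refine Asymptotics.IsBigO.trans_isLittleO ?_ h
    refine Asymptotics.IsBigO.of_bound 1 ?_
    filter_upwards with y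
    have hs0 : s ≠ 0 := by linarith
    simp only [max_self, Real.zero_rpow hs0, sub_zero, smul_zero, abs_zero, one_mul]
    rw [Real.norm_of_nonneg (by positivity), Real.norm_of_nonneg (by positivity)]
    apply Real.rpow_le_rpow (by positivity) _ (by linarith)
    exact max_le (le_abs_self y) (abs_nonneg y)
  · have h1 : (fun t : ℝ => (max t 0) ^ s) =ᶠ[nhds t] fun t => t ^ s := by
      filter_upwards [Ioi_mem_nhds ht] with y hy
      rw [max_eq_left (le_of_lt hy)]
    rw [max_eq_left ht.le]
    exact (Real.hasDerivAt_rpow_const (Or.inr hs.le)).congr_of_eventuallyEq h1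

lemma contDiff_pospow {s : ℝ} (hs : 1 < s) : ContDiff ℝ 1 (fun t : ℝ => (max t 0) ^ s) := by
  rw [contDiff_one_iff_deriv]
  refine ⟨fun t => (hasDerivAt_pospow hs t).differentiableAt, ?_⟩
  have : deriv (fun t : ℝ => (max t 0) ^ s) = fun t => s * (max t 0) ^ (s - 1) := by
    ext t; exact (hasDerivAt_pospow hs t).deriv
  rw [this]
  refine continuous_const.mul (Continuous.rpow_const (by fun_prop) ?_)
  intro x; right; linarith

/-- Positive part of `W` cut to a ball. -/
def trunc {n : ℕ} (z : Euc n) (ρ : ℝ) (W : Euc n → ℝ) (x : Euc n) : ℝ :=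
  (ball z ρ).indicator (fun x => max (W x) 0) x

lemma trunc_nonneg {n : ℕ} (z : Euc n) (ρ : ℝ) (W : Euc n → ℝ) (x : Euc n) :
    0 ≤ trunc z ρ W x := by
  unfold trunc
  apply indicator_nonneg
  intro y _
  exact le_max_right _ _

lemma trunc_out {n : ℕ} {z : Euc n} {ρ : ℝ} {W : Euc n → ℝ} {x : Euc n} (h : x ∉ ball z ρ) :
    trunc z ρ W x = 0 := by
  unfold trunc; exact indicator_of_notMem h _

lemma trunc_in {n : ℕ} {z : Euc n} {ρ : ℝ} {W : Euc n → ℝ} {x : Euc n} (h : x ∈ ball z ρ) :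
    trunc z ρ W x = max (W x) 0 := by
  unfold trunc; exact indicator_of_mem h _

section
variable {n : ℕ} {W : Euc n → ℝ} {z : Euc n} {ρ' ρ : ℝ}

lemma trunc_eventually_zero
    (h0 : ∀ x, ρ' < dist x z → dist x z < ρ → W x ≤ 0) {x : Euc n} (hx : ρ' < dist x z) :
    trunc z ρ W =ᶠ[nhds x] fun _ => 0 := by
  have : {y : Euc n | ρ' < dist y z} ∈ nhds x :=
    (isOpen_lt continuous_const (by fun_prop)).mem_nhds hx
  filter_upwards [this] with y hy
  by_cases hyb : y ∈ ball z ρ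
  · rw [trunc_in hyb, max_eq_right (h0 y hy hyb)]
  · exact trunc_out hyb

lemma trunc_eventually_in {x : Euc n} (hx : x ∈ ball z ρ) :
    trunc z ρ W =ᶠ[nhds x] fun y => max (W y) 0 := by
  filter_upwards [isOpen_ball.mem_nhds hx] with y hy using trunc_in hy

lemma trunc_continuous (hW : Continuous W) (h : ρ' < ρ)
    (h0 : ∀ x, ρ' < dist x z → dist x z < ρ → W x ≤ 0) : Continuous (trunc z ρ W) := by
  rw [continuous_iff_continuousAt]
  intro x
  by_cases hx : x ∈ ball z ρ
  · exact ContinuousAt.congr (by fun_prop) (trunc_eventually_in (W := W) hx).symm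
  · have hx' : ρ' < dist x z := lt_of_lt_of_le h (by simpa using hx)
    exact ContinuousAt.congr (by fun_prop) (trunc_eventually_zero h0 hx').symm

lemma trunc_compact (s : ℝ) (hs : 0 < s) :
    HasCompactSupport (fun x => trunc z ρ W x ^ s) := by
  refine HasCompactSupport.intro (isCompact_closedBall z ρ) ?_
  intro x hx
  have hx' : x ∉ ball z ρ := fun h => hx (ball_subset_closedBall h)
  simp only [trunc_out hx']
  exact Real.zero_rpow hs.ne'

lemma trunc_pow_contDiff (hW : ContDiff ℝ 1 W) (h : ρ' < ρ)
    (h0 : ∀ x, ρ' < dist x z → dist x z < ρ → W x ≤ 0) {s : ℝ} (hs : 1 < s) :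
    ContDiff ℝ 1 (fun x => trunc z ρ W x ^ s) := by
  rw [contDiff_iff_contDiffAt]
  intro x
  by_cases hx : x ∈ ball z ρ
  · have h1 : (fun x => trunc z ρ W x ^ s) =ᶠ[nhds x] fun y => (max (W y) 0) ^ s := by
      filter_upwards [trunc_eventually_in (W := W) hx] with y hy
      rw [hy]
    refine ContDiffAt.congr_of_eventuallyEq ?_ h1
    exact ((contDiff_pospow hs).comp hW).contDiffAt
  · have hx' : ρ' < dist x z := lt_of_lt_of_le h (by simpa using hx)
    have h1 : (fun x => trunc z ρ W x ^ s) =ᶠ[nhds x] fun y => 0 := by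
      filter_upwards [trunc_eventually_zero h0 hx'] with y hy
      rw [hy, Real.zero_rpow (by linarith)]
    exact contDiffAt_const.congr_of_eventuallyEq h1

lemma trunc_pow_gradient (hW : ContDiff ℝ 1 W) (h : ρ' < ρ)
    (h0 : ∀ x, ρ' < dist x z → dist x z < ρ → W x ≤ 0) {s : ℝ} (hs : 1 < s) (x : Euc n) :
    gradient (fun x => trunc z ρ W x ^ s) x = (s * trunc z ρ W x ^ (s - 1)) • gradient W x := by
  by_cases hx : x ∈ ball z ρ
  · have h1 : (fun x => trunc z ρ W x ^ s) =ᶠ[nhds x] fun y => (max (W y) 0) ^ s := by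
      filter_upwards [trunc_eventually_in (W := W) hx] with y hy
      rw [hy]
    rw [gradient, h1.fderiv_eq, trunc_in hx]
    have hd : HasFDerivAt W (fderiv ℝ W x) x :=
      (hW.differentiable one_ne_zero x).hasFDerivAt
    have := (hasDerivAt_pospow hs (W x)).comp_hasFDerivAt x hd
    rw [show (fun y => (max (W y) 0) ^ s) = (fun t : ℝ => (max t 0) ^ s) ∘ W from rfl, this.fderiv]
    rw [gradient, map_smul]
  · have hx' : ρ' < dist x z := lt_of_lt_of_le h (by simpa using hx)
    have h1 : (fun x => trunc z ρ W x ^ s) =ᶠ[nhds x] fun y => 0 := by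
      filter_upwards [trunc_eventually_zero h0 hx'] with y hy
      rw [hy, Real.zero_rpow (by linarith)]
    rw [gradient, h1.fderiv_eq, trunc_out hx, Real.zero_rpow (by linarith)]
    simp

end

lemma gradient_continuous {n : ℕ} {u : Euc n → ℝ} (hu : ContDiff ℝ 1 u) :
    Continuous (gradient u) :=
  (LinearIsometryEquiv.continuous _).comp (hu.continuous_fderiv one_ne_zero)

lemma locInt_of_bdd {n : ℕ} {E : Type*} [NormedAddCommGroup E] {f : Euc n → E}
    (hm : AEStronglyMeasurable f volume)
    (hb : ∀ K : Set (Euc n), IsCompact K → ∃ C, ∀ x ∈ K, ‖f x‖ ≤ C) :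
    LocallyIntegrable f := by
  rw [locallyIntegrable_iff]
  intro K hK
  obtain ⟨C, hC⟩ := hb K hK
  refine IntegrableOn.of_bound hK.measure_lt_top hm.restrict C ?_
  exact (ae_restrict_iff' hK.measurableSet).2 (Eventually.of_forall hC)

/-- Bundle of the data: `u` is a `C¹` function satisfying the weak inequality for `C¹` tests, with
`a = q g(u)`. -/
structure Data (n : ℕ) (p C₁ C₂ α : ℝ) (F : Euc n → Euc n) (b a : Euc n → ℝ) (u : Euc n → ℝ) :
    Prop where
  hn : 2 ≤ n
  hp : 1 < p
  hC₁ : 0 < C₁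
  hC₂ : 0 < C₂
  hα₁ : p - 1 ≤ α
  hα₂ : α ≤ p
  hu : ContDiff ℝ 1 u
  hF : LocallyIntegrable F
  hF1 : ∀ x, C₁ * ‖gradient u x‖ ^ p ≤ ⟪gradient u x, F x⟫
  hF2 : ∀ x, ‖F x‖ ≤ C₂ * ‖gradient u x‖ ^ (p - 1)
  hb : LocallyIntegrable b
  hb0 : ∀ x, 0 ≤ b x
  hbloc : LocBdd b
  ha : LocallyIntegrable a
  ha0 : ∀ x, 0 ≤ a x
  hc : LocallyIntegrable (fun x => b x * ‖gradient u x‖ ^ α)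
  weak : ∀ φ : Euc n → ℝ, ContDiff ℝ 1 φ → HasCompactSupport φ → (∀ x, 0 ≤ φ x) →
      (∫ x, a x * φ x) ≤ (-(∫ x, ⟪F x, gradient φ x⟫)) +
        ∫ x, b x * ‖gradient u x‖ ^ α * φ x

lemma mkData (n : ℕ) (hn : 2 ≤ n) (p C₁ C₂ α : ℝ) (hp : 1 < p)
    (hC₁ : 0 < C₁) (hC₂ : 0 < C₂) (hα₁ : p - 1 ≤ α) (hα₂ : α ≤ p)
    (A : Euc n → Euc n → Euc n) (hA : StructCond A p C₁ C₂)
    (b : Euc n → ℝ) (hbm : Measurable b) (hb0 : ∀ x, 0 ≤ b x) (hbloc : LocBdd b)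
    (q : Euc n → ℝ) (hqm : Measurable q) (hq0 : ∀ x, 0 ≤ q x) (hqloc : LocBdd q)
    (g : ℝ → ℝ) (hg : ContinuousOn g (Set.Ici 0)) (hg0 : ∀ t ∈ Set.Ici (0 : ℝ), 0 ≤ g t)
    (u : Euc n → ℝ) (hu : ContDiff ℝ 1 u) (hu0 : ∀ x, 0 ≤ u x)
    (hsol : IsWeakSol A b α (fun x => q x * g (u x)) Set.univ u) :
    Data n p C₁ C₂ α (fun x => A x (gradient u x)) b (fun x => q x * g (u x)) u := by
  have hgu : Continuous (fun x => g (u x)) := hg.comp_continuous hu.continuous hu0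
  have hgc := gradient_continuous hu
  have hα0 : 0 ≤ α := by linarith
  have hF : LocallyIntegrable (fun x => A x (gradient u x)) := by
    refine locInt_of_bdd ?_ ?_
    · have : Measurable (fun x => A x (gradient u x)) :=
        hA.1.comp (measurable_id.prodMk hgc.measurable)
      exact this.aestronglyMeasurable
    · intro K hK
      obtain ⟨C, hC⟩ := hK.exists_bound_of_continuousOn (f := fun x => C₂ * ‖gradient u x‖ ^ (p - 1))
        (Continuous.continuousOn (continuous_const.mul
          (hgc.norm.rpow_const (fun x => Or.inr (by linarith)))))
      refine ⟨C, fun x hx => ((hA.2 x _).2).trans ((le_abs_self _).trans (hC x hx))⟩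
  have mulb : ∀ (b : Euc n → ℝ), Measurable b → (∀ x, 0 ≤ b x) → LocBdd b → ∀ f : Euc n → ℝ,
      Continuous f → LocallyIntegrable (fun x => b x * f x) := by
    intro b hbm hb0 hbloc f hf
    refine locInt_of_bdd (hbm.mul hf.measurable).aestronglyMeasurable ?_
    intro K hK
    obtain ⟨C, hC⟩ := hK.exists_bound_of_continuousOn hf.continuousOn
    obtain ⟨C', hC'⟩ := hbloc K hK
    refine ⟨C' * C, fun x hx => ?_⟩
    rw [norm_mul, Real.norm_of_nonneg (hb0 x)]
    exact mul_le_mul (hC' x hx) (hC x hx) (norm_nonneg _) ((hb0 x).trans (hC' x hx))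
  have ha := mulb q hqm hq0 hqloc _ hgu
  have hc := mulb b hbm hb0 hbloc (fun x => ‖gradient u x‖ ^ α)
    (hgc.norm.rpow_const (fun x => Or.inr hα0))
  refine ⟨hn, hp, hC₁, hC₂, hα₁, hα₂, hu, hF, fun x => (hA.2 x _).1, fun x => (hA.2 x _).2, ?_,
    hb0, hbloc, ha, fun x => mul_nonneg (hq0 x) (hg0 _ (hu0 x)), hc, ?_⟩
  · simpa using mulb b hbm hb0 hbloc (fun _ => 1) continuous_const
  · refine ext_C1 _ _ _ hF ha hc ?_
    intro φ h1 h2 h3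
    have := hsol φ h1 h2 (subset_univ _) h3
    simpa using this

lemma young1 {N d p C₁ C₂ : ℝ} (hN : 0 ≤ N) (hd : 0 < d) (hp : 1 < p) (h1 : 0 < C₁) (h2 : 0 < C₂) :
    12 * C₂ * N ^ (p - 1) * d ≤ C₁ / 2 * N ^ p + 12 * C₂ * (24 * C₂ / C₁) ^ (p - 1) * d ^ p := by
  set Λ := 24 * C₂ / C₁ with hΛ
  have hΛ0 : 0 < Λ := by positivity
  by_cases h : Λ * d ≤ N
  · have hNp : 0 < N := lt_of_lt_of_le (by positivity) h
    have e : N ^ p = N ^ (p - 1) * N := by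
      rw [← Real.rpow_add_one hNp.ne']; congr 1; ring
    have : 12 * C₂ * N ^ (p - 1) * d ≤ C₁ / 2 * N ^ p := by
      rw [e]
      have : 12 * C₂ * d = C₁ / 2 * (Λ * d) := by rw [hΛ]; field_simp; ring
      have h3 : 12 * C₂ * N ^ (p - 1) * d = N ^ (p - 1) * (C₁ / 2 * (Λ * d)) := by
        rw [← this]; ring
      rw [h3]
      have h4 : C₁ / 2 * (N ^ (p - 1) * N) = N ^ (p - 1) * (C₁ / 2 * N) := by ring
      rw [h4]
      gcongr
    have : 0 ≤ 12 * C₂ * Λ ^ (p - 1) * d ^ p := by positivity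
    linarith
  · push Not at h
    have e : d ^ p = d ^ (p - 1) * d := by
      rw [← Real.rpow_add_one hd.ne']; congr 1; ring
    have h3 : N ^ (p - 1) ≤ Λ ^ (p - 1) * d ^ (p - 1) := by
      rw [← Real.mul_rpow hΛ0.le hd.le]
      exact Real.rpow_le_rpow hN h.le (by linarith)
    have h4 : 0 ≤ C₁ / 2 * N ^ p := by positivity
    rw [e]
    have : 12 * C₂ * N ^ (p - 1) * d ≤ 12 * C₂ * (Λ ^ (p - 1) * d ^ (p - 1)) * d := by gcongr
    linarith [this]

lemma young2 {N d p α : ℝ} (hN : 0 ≤ N) (hd : 0 < d) (h0 : 0 ≤ α) (hα : α ≤ p) :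
    N ^ α ≤ d ^ α + d ^ (α - p) * N ^ p := by
  by_cases h : N ≤ d
  · have := Real.rpow_le_rpow hN h h0
    have h3 : 0 ≤ d ^ (α - p) * N ^ p := by positivity
    linarith
  · push Not at h
    have hN' : 0 < N := hd.trans h
    have e : N ^ α = N ^ (α - p) * N ^ p := by rw [← Real.rpow_add hN']; congr 1; ring
    have : N ^ (α - p) ≤ d ^ (α - p) := Real.rpow_le_rpow_of_nonpos hd h.le (by linarith)
    have h3 : N ^ (α - p) * N ^ p ≤ d ^ (α - p) * N ^ p := by gcongr
    have : 0 ≤ d ^ α := by positivity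
    linarith

section
variable {n : ℕ} {p C₁ C₂ α : ℝ} {F : Euc n → Euc n} {b a u : Euc n → ℝ}

lemma tested (D : Data n p C₁ C₂ α F b a u) {W : Euc n → ℝ} {z : Euc n} {ρ' ρ : ℝ}
    (hW : ContDiff ℝ 1 W) (h : ρ' < ρ)
    (h0 : ∀ x, ρ' < dist x z → dist x z < ρ → W x ≤ 0) {s : ℝ} (hs : 1 < s)
    (Ψ Φ : Euc n → ℝ) (hΨ : Integrable Ψ) (hΦ : Integrable Φ)
    (h1 : ∀ᵐ x, Ψ x ≤ a x * trunc z ρ W x ^ s)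
    (h2 : ∀ᵐ x, -((s * trunc z ρ W x ^ (s - 1)) * ⟪F x, gradient W x⟫)
      + b x * ‖gradient u x‖ ^ α * trunc z ρ W x ^ s ≤ Φ x) :
    ∫ x, Ψ x ≤ ∫ x, Φ x := by
  have hcd := trunc_pow_contDiff hW h h0 hs
  have hcc := trunc_compact (z := z) (ρ := ρ) (W := W) s (by linarith)
  have hnn : ∀ x, 0 ≤ trunc z ρ W x ^ s := fun x => Real.rpow_nonneg (trunc_nonneg _ _ _ _) _
  have hw := D.weak _ hcd hcc hnn
  have i1 : Integrable (fun x => a x * trunc z ρ W x ^ s) := by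
    simpa using D.ha.integrable_smul_right_of_hasCompactSupport hcd.continuous hcc
  have i2 : Integrable (fun x => b x * ‖gradient u x‖ ^ α * trunc z ρ W x ^ s) := by
    simpa using D.hc.integrable_smul_right_of_hasCompactSupport hcd.continuous hcc
  have hgr : ∀ x, ⟪F x, gradient (fun x => trunc z ρ W x ^ s) x⟫
      = (s * trunc z ρ W x ^ (s - 1)) * ⟪F x, gradient W x⟫ := by
    intro x
    rw [trunc_pow_gradient hW h h0 hs x, inner_smul_right]
  have i3 : Integrable (fun x => ⟪F x, gradient (fun x => trunc z ρ W x ^ s) x⟫) := by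
    have hgc := gradient_continuous hcd
    have hz : ∀ x, x ∉ closedBall z ρ → gradient (fun x => trunc z ρ W x ^ s) x = 0 := by
      intro x hx
      have hx' : x ∉ ball z ρ := fun h => hx (ball_subset_closedBall h)
      rw [trunc_pow_gradient hW h h0 hs x, trunc_out hx', Real.zero_rpow (by linarith)]
      simp
    obtain ⟨C, hC⟩ := (isCompact_closedBall z ρ).exists_bound_of_continuousOn hgc.continuousOn
    have hi : IntegrableOn (fun x => ⟪F x, gradient (fun x => trunc z ρ W x ^ s) x⟫)
        (closedBall z ρ) := by
      have hFi : IntegrableOn F (closedBall z ρ) :=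
        D.hF.integrableOn_isCompact (isCompact_closedBall z ρ)
      refine Integrable.mono' (hFi.norm.mul_const C) ?_ ?_
      · exact hFi.aestronglyMeasurable.inner hgc.aestronglyMeasurable
      · refine (ae_restrict_iff' measurableSet_closedBall).2 (Eventually.of_forall ?_)
        intro x hx
        refine (norm_inner_le_norm _ _).trans ?_
        gcongr; exact hC x hx
    rw [← integrableOn_iff_integrable_of_support_subset (s := closedBall z ρ)]
    · exact hi
    · intro x hx
      by_contra hne
      apply hx
      simp only [hz x hne, inner_zero_right]
  calc ∫ x, Ψ x ≤ ∫ x, a x * trunc z ρ W x ^ s := integral_mono_ae hΨ i1 h1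
    _ ≤ _ := hw
    _ = ∫ x, (-⟪F x, gradient (fun x => trunc z ρ W x ^ s) x⟫ +
          b x * ‖gradient u x‖ ^ α * trunc z ρ W x ^ s) := by
        rw [← integral_neg]
        exact (integral_add i3.neg i2).symm
    _ ≤ ∫ x, Φ x := by
        refine integral_mono_ae (i3.neg.add i2) hΦ ?_
        filter_upwards [h2] with x hx
        simp only [hgr]
        exact hx

/-- The auxiliary function `u - t - 3 (δ/ρ²) |x-z|²`. -/
def Wf (u : Euc n → ℝ) (z : Euc n) (δ ρ t : ℝ) (x : Euc n) : ℝ :=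
  u x - t - 3 * δ / ρ ^ 2 * ‖x - z‖ ^ 2

lemma Wf_contDiff (hu : ContDiff ℝ 1 u) (z : Euc n) (δ ρ t : ℝ) : ContDiff ℝ 1 (Wf u z δ ρ t) := by
  unfold Wf
  have : ContDiff ℝ 1 (fun x : Euc n => ‖x - z‖ ^ 2) := (contDiff_id.sub contDiff_const).norm_sq ℝ
  fun_prop

lemma Wf_gradient (hu : ContDiff ℝ 1 u) (z : Euc n) (δ ρ t : ℝ) (x : Euc n) :
    gradient (Wf u z δ ρ t) x = gradient u x - (6 * δ / ρ ^ 2) • (x - z) := by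
  apply HasGradientAt.gradient
  rw [hasGradientAt_iff_hasFDerivAt]
  have hd : HasFDerivAt u (fderiv ℝ u x) x := (hu.differentiable one_ne_zero x).hasFDerivAt
  have h2 : HasFDerivAt (fun x : Euc n => x - z) (ContinuousLinearMap.id ℝ (Euc n)) x :=
    (hasFDerivAt_id x).sub_const z
  have h3 := (h2.norm_sq).const_mul (3 * δ / ρ ^ 2)
  have h4 := (hd.sub_const t).sub h3
  refine HasFDerivAt.congr_fderiv h4 ?_
  ext y
  simp [gradient]
  ring

lemma Wf_neg {z : Euc n} {δ ρ k t : ℝ} (hδ : 0 < δ) (hρ : 0 < ρ) (ht : k ≤ t)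
    (hub : ∀ x ∈ ball z ρ, u x ≤ k + 2 * δ) :
    ∀ x, (5 / 6) * ρ < dist x z → dist x z < ρ → Wf u z δ ρ t x ≤ 0 := by
  intro x h1 h2
  have := hub x h2
  unfold Wf
  rw [dist_eq_norm] at h1
  have h3 : ((5 / 6) * ρ) ^ 2 ≤ ‖x - z‖ ^ 2 := by gcongr
  have h4 : 3 * δ / ρ ^ 2 * ((5 / 6) * ρ) ^ 2 ≤ 3 * δ / ρ ^ 2 * ‖x - z‖ ^ 2 := by gcongr
  have h5 : 3 * δ / ρ ^ 2 * ((5 / 6) * ρ) ^ 2 = 75 / 36 * δ := by field_simp; ring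
  linarith

lemma int_trunc_mul {W : Euc n → ℝ} {z : Euc n} {ρ' ρ : ℝ}
    (hW : Continuous W) (h : ρ' < ρ)
    (h0 : ∀ x, ρ' < dist x z → dist x z < ρ → W x ≤ 0) {f : Euc n → ℝ} (hf : Continuous f) :
    Integrable (fun x => f x * trunc z ρ W x) := by
  refine Continuous.integrable_of_hasCompactSupport (hf.mul (trunc_continuous hW h h0)) ?_
  have := (trunc_compact (z := z) (ρ := ρ) (W := W) 1 one_pos)
  simp only [Real.rpow_one] at this
  exact this.mul_left

/-- constant in the energy inequality -/
def Ken (p C₁ C₂ : ℝ) : ℝ := 12 * C₂ * (24 * C₂ / C₁) ^ (p - 1) + C₁ / 2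

lemma energy (D : Data n p C₁ C₂ α F b a u) {z : Euc n} {δ ρ k t B h : ℝ} (hδ : 0 < δ)
    (hρ : 0 < ρ) (ht : k ≤ t) (hub : ∀ x ∈ ball z ρ, u x ≤ k + 2 * δ)
    (hB0 : 0 ≤ B) (hB : ∀ᵐ x, x ∈ ball z ρ → b x ≤ B)
    (hh : ∀ᵐ x, x ∈ ball z ρ → k < u x → h ≤ a x)
    (hS : B * δ * (δ / ρ) ^ (α - p) ≤ C₁ / 4) :
    h * (∫ x, trunc z ρ (Wf u z δ ρ t) x ^ 2) +
      C₁ * (∫ x, ‖gradient u x‖ ^ p * trunc z ρ (Wf u z δ ρ t) x) ≤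
      Ken p C₁ C₂ * (δ / ρ) ^ p * ∫ x, trunc z ρ (Wf u z δ ρ t) x := by
  have hC₁ := D.hC₁
  have hC₂ := D.hC₂
  have hp := D.hp
  have hα0 : 0 ≤ α := by linarith [D.hα₁]
  have hd : 0 < δ / ρ := by positivity
  set d := δ / ρ with hdd
  have hW := Wf_contDiff D.hu z δ ρ t
  have h56 : 5 / 6 * ρ < ρ := by linarith
  have h0 := Wf_neg (u := u) hδ hρ ht hub
  have hgc := gradient_continuous D.hu
  set v := trunc z ρ (Wf u z δ ρ t) with hv
  have hvc : Continuous v := trunc_continuous hW.continuous h56 h0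
  have iv2 : Integrable (fun x => v x ^ 2) := by
    simpa [pow_two] using int_trunc_mul hW.continuous h56 h0 hvc
  have ivN : Integrable (fun x => ‖gradient u x‖ ^ p * v x) :=
    int_trunc_mul hW.continuous h56 h0 (hgc.norm.rpow_const (fun x => Or.inr (by linarith)))
  have iv : Integrable (fun x => v x) := by
    simpa using int_trunc_mul hW.continuous h56 h0 (continuous_const (y := (1:ℝ)))
  have hv0 : ∀ x, 0 ≤ v x := trunc_nonneg _ _ _
  have key := tested D hW h56 h0 one_lt_two (fun x => h * v x ^ 2)
    (fun x => Ken p C₁ C₂ * d ^ p * v x - C₁ * (‖gradient u x‖ ^ p * v x)) (iv2.const_mul _)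
    ((iv.const_mul _).sub (ivN.const_mul _)) ?_ ?_
  · rw [integral_sub (iv.const_mul _) (ivN.const_mul _)] at key
    simp only [integral_const_mul] at key
    linarith
  · filter_upwards [hh] with x hx
    rw [← hv, Real.rpow_two]
    by_cases hvx : v x = 0
    · simp [hvx]
    · have hxb : x ∈ ball z ρ := by
        by_contra hne
        exact hvx (trunc_out hne)
      have hvi : v x = max (Wf u z δ ρ t x) 0 := trunc_in hxb
      have hWp : 0 < Wf u z δ ρ t x := by
        by_contra hne
        push Not at hne
        rw [max_eq_right hne] at hvi
        exact hvx hvi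
      have : k < u x := by
        unfold Wf at hWp
        have : 0 ≤ 3 * δ / ρ ^ 2 * ‖x - z‖ ^ 2 := by positivity
        linarith
      have := hx hxb this
      gcongr
  · filter_upwards [hB] with x hx
    rw [← hv, Real.rpow_two, show (2:ℝ) - 1 = 1 by norm_num, Real.rpow_one]
    by_cases hvx : v x = 0
    · simp [hvx]
    · have hxb : x ∈ ball z ρ := by
        by_contra hne
        exact hvx (trunc_out hne)
      have hvi : v x = max (Wf u z δ ρ t x) 0 := trunc_in hxb
      have hv2 : v x ≤ 2 * δ := by
        rw [hvi]
        refine max_le ?_ (by linarith)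
        unfold Wf
        have : 0 ≤ 3 * δ / ρ ^ 2 * ‖x - z‖ ^ 2 := by positivity
        linarith [hub x hxb]
      have hbB := hx hxb
      set N := ‖gradient u x‖ with hN
      have hN0 : 0 ≤ N := norm_nonneg _
      have hvx0 := hv0 x
      rw [Wf_gradient D.hu, inner_sub_right, inner_smul_right]
      have e1 : C₁ * N ^ p ≤ ⟪F x, gradient u x⟫ := by
        rw [real_inner_comm]; exact D.hF1 x
      have hxz : ‖x - z‖ ≤ ρ := by rw [← dist_eq_norm]; exact (mem_ball.1 hxb).le
      have e2 : (6 * δ / ρ ^ 2) * ⟪F x, x - z⟫ ≤ 6 * C₂ * N ^ (p - 1) * d := by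
        have : ⟪F x, x - z⟫ ≤ (C₂ * N ^ (p - 1)) * ρ := by
          refine (real_inner_le_norm _ _).trans ?_
          exact mul_le_mul (D.hF2 x) hxz (norm_nonneg _) (by positivity)
        calc (6 * δ / ρ ^ 2) * ⟪F x, x - z⟫ ≤ (6 * δ / ρ ^ 2) * ((C₂ * N ^ (p - 1)) * ρ) := by
              gcongr
          _ = 6 * C₂ * N ^ (p - 1) * d := by rw [hdd]; field_simp
      have e3 := young1 hN0 hd hp hC₁ hC₂
      have e4 := young2 hN0 hd hα0 D.hα₂
      have e5 : b x * N ^ α * v x ^ 2 ≤ C₁ / 2 * (d ^ p + N ^ p) * v x := by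
        have e6 : b x * N ^ α * v x ≤ B * (d ^ α + d ^ (α - p) * N ^ p) * (2 * δ) := by
          have := D.hb0 x
          gcongr
        have e7 : d ^ α = d ^ (α - p) * d ^ p := by
          rw [← Real.rpow_add hd]; congr 1; ring
        have e8 : B * (d ^ α + d ^ (α - p) * N ^ p) * (2 * δ)
            = 2 * (B * δ * d ^ (α - p)) * (d ^ p + N ^ p) := by rw [e7]; ring
        have e9 : 2 * (B * δ * d ^ (α - p)) * (d ^ p + N ^ p) ≤ C₁ / 2 * (d ^ p + N ^ p) := by
          have : 0 ≤ d ^ p + N ^ p := by positivity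
          nlinarith
        calc b x * N ^ α * v x ^ 2 = (b x * N ^ α * v x) * v x := by ring
          _ ≤ _ := by
            apply mul_le_mul_of_nonneg_right _ hvx0
            linarith
      have e10 : -(2 * v x * (⟪F x, gradient u x⟫ - 6 * δ / ρ ^ 2 * ⟪F x, x - z⟫)) ≤
          v x * (-2 * C₁ * N ^ p + (C₁ / 2 * N ^ p + 12 * C₂ * (24 * C₂ / C₁) ^ (p - 1) * d ^ p)) := by
        have : -(2 * v x * (⟪F x, gradient u x⟫ - 6 * δ / ρ ^ 2 * ⟪F x, x - z⟫)) =
          v x * (-(2 * ⟪F x, gradient u x⟫) + 2 * (6 * δ / ρ ^ 2 * ⟪F x, x - z⟫)) := by ring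
        rw [this]
        apply mul_le_mul_of_nonneg_left _ hvx0
        linarith
      unfold Ken
      linarith [e5, e10]

end

lemma iter_lemma {c s : ℝ} (hc : 0 < c) (hs : 1 < s) : ∃ ε : ℝ, 0 < ε ∧ ∀ y : ℕ → ℝ,
    (∀ j, 0 ≤ y j) → (∀ j, y (j + 1) ≤ c * (4 ^ j * y j) ^ s) → y 0 ≤ ε →
    Tendsto y atTop (nhds 0) := by
  set κ : ℝ := (4:ℝ) ^ (-(s / (s - 1))) with hκ
  have hs1 : 0 < s - 1 := by linarith
  have hκ0 : 0 < κ := by positivity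
  have hκ1 : κ < 1 := by
    apply Real.rpow_lt_one_of_one_lt_of_neg (by norm_num)
    have : 0 < s / (s - 1) := by positivity
    linarith
  set ε : ℝ := (κ / c) ^ (1 / (s - 1)) with hε
  have hε0 : 0 < ε := by positivity
  refine ⟨ε, hε0, fun y hy0 hy hyε => ?_⟩
  have e1 : (4:ℝ) ^ s * κ ^ s = κ := by
    rw [hκ, ← Real.rpow_mul (by norm_num), ← Real.rpow_add (by norm_num)]
    congr 1
    field_simp
    ring
  have e2 : c * ε ^ s = κ * ε := by
    have : ε ^ s = ε ^ (s - 1) * ε := by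
      rw [← Real.rpow_add_one hε0.ne']; congr 1; ring
    rw [this, hε, ← Real.rpow_mul (by positivity), one_div_mul_cancel hs1.ne', Real.rpow_one]
    field_simp
  clear_value ε
  clear_value κ
  have main : ∀ j, y j ≤ ε * κ ^ j := by
    intro j
    induction j with
    | zero => simpa using hyε
    | succ j ih =>
      calc y (j + 1) ≤ c * (4 ^ j * y j) ^ s := hy j
        _ ≤ c * (4 ^ j * (ε * κ ^ j)) ^ s := by
          have := hy0 j
          gcongr
        _ = c * ε ^ s * ((4:ℝ) ^ s * κ ^ s) ^ j := by
          rw [Real.mul_rpow (by positivity) (mul_nonneg hε0.le (pow_nonneg hκ0.le j)),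
            Real.mul_rpow hε0.le (pow_nonneg hκ0.le j), mul_pow,
            Real.rpow_pow_comm (by norm_num : (0:ℝ) ≤ 4), Real.rpow_pow_comm hκ0.le]
          ring
        _ = ε * κ ^ (j + 1) := by rw [e1, e2]; ring
  refine squeeze_zero hy0 main ?_
  simpa using (tendsto_pow_atTop_nhds_zero_of_lt_one hκ0.le hκ1).const_mul ε

lemma sobolev_real {n : ℕ} (hn : 2 ≤ n) : ∃ S : ℝ, 0 < S ∧ ∀ f : Euc n → ℝ, ContDiff ℝ 1 f →
    HasCompactSupport f → ∀ (E : Set (Euc n)), MeasurableSet E → ∀ η : ℝ, 0 < η →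
    (∀ x ∈ E, η ≤ f x) → ∀ X : ℝ, (∫ x, ‖gradient f x‖) ≤ X →
    η ^ ((n:ℝ) / (n - 1)) * volume.real E ≤ S * X ^ ((n:ℝ) / (n - 1)) := by
  set s : ℝ := (n:ℝ) / (n - 1) with hs
  have hn' : (2:ℝ) ≤ n := by exact_mod_cast hn
  have hs0 : 0 < s := by apply div_pos <;> linarith
  set S0 := lintegralPowLePowLIntegralFDerivConst (volume : Measure (Euc n)) s
  refine ⟨S0 + 1, by positivity, ?_⟩
  intro f hf hfc E hE η hη hfE X hX
  have hX0 : 0 ≤ X := le_trans (integral_nonneg (fun _ => norm_nonneg _)) hX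
  have hconj : Real.HolderConjugate (Module.finrank ℝ (Euc n)) s := by
    rw [finrank_euclideanSpace_fin]
    exact Real.HolderConjugate.conjExponent (by linarith)
  have h1 := lintegral_pow_le_pow_lintegral_fderiv (volume : Measure (Euc n)) hf hfc hconj
  have h2 : (∫⁻ x, ‖fderiv ℝ f x‖ₑ) ≤ ENNReal.ofReal X := by
    have hIntF : Integrable (fderiv ℝ f) :=
      (hf.continuous_fderiv one_ne_zero).integrable_of_hasCompactSupport (hfc.fderiv ℝ)
    have : (∫⁻ x, ‖fderiv ℝ f x‖ₑ) = ENNReal.ofReal (∫ x, ‖fderiv ℝ f x‖) :=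
      (ofReal_integral_norm_eq_lintegral_enorm hIntF).symm
    rw [this]
    apply ENNReal.ofReal_le_ofReal
    refine le_trans (le_of_eq ?_) hX
    congr 1
    ext x
    rw [gradient, LinearIsometryEquiv.norm_map]
  have h3 : ENNReal.ofReal (η ^ s) * volume E ≤ ∫⁻ x, ‖f x‖ₑ ^ s := by
    calc ENNReal.ofReal (η ^ s) * volume E = ∫⁻ x in E, ENNReal.ofReal (η ^ s) := by
          rw [setLIntegral_const]
      _ ≤ ∫⁻ x in E, ‖f x‖ₑ ^ s := by
          refine setLIntegral_mono' hE ?_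
          intro x hx
          rw [← ENNReal.ofReal_rpow_of_pos hη]
          apply ENNReal.rpow_le_rpow _ hs0.le
          rw [Real.enorm_eq_ofReal (hη.le.trans (hfE x hx))]
          exact ENNReal.ofReal_le_ofReal (hfE x hx)
      _ ≤ _ := setLIntegral_le_lintegral _ _
  have h4 : ENNReal.ofReal (η ^ s) * volume E ≤ (S0 : ℝ≥0∞) * ENNReal.ofReal X ^ s := by
    refine h3.trans (h1.trans ?_)
    gcongr
  have h5 := ENNReal.toReal_mono (by
    apply ENNReal.mul_ne_top (by simp)
    exact ENNReal.rpow_ne_top_of_nonneg hs0.le ENNReal.ofReal_ne_top) h4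
  rw [ENNReal.toReal_mul, ENNReal.toReal_mul, ENNReal.toReal_ofReal (by positivity),
    ← ENNReal.toReal_rpow, ENNReal.toReal_ofReal hX0] at h5
  refine le_trans h5 ?_
  have : 0 ≤ X ^ s := by positivity
  rw [ENNReal.coe_toReal]
  nlinarith

section
variable {n : ℕ} {p C₁ C₂ α : ℝ} {F : Euc n → Euc n} {b a u : Euc n → ℝ}

/-- superlevel sets -/
def Elev (u : Euc n → ℝ) (z : Euc n) (δ ρ t : ℝ) : Set (Euc n) :=
  {x | x ∈ ball z ρ ∧ 0 < Wf u z δ ρ t x}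

lemma Elev_open (hu : ContDiff ℝ 1 u) (z : Euc n) (δ ρ t : ℝ) : IsOpen (Elev u z δ ρ t) :=
  isOpen_ball.inter (isOpen_lt continuous_const (Wf_contDiff hu z δ ρ t).continuous)

lemma Elev_sub (z : Euc n) (δ ρ t : ℝ) : Elev u z δ ρ t ⊆ ball z ρ := fun _ h => h.1

lemma Elev_fin (z : Euc n) (δ ρ t : ℝ) : volume (Elev u z δ ρ t) ≠ ⊤ :=
  ((measure_mono (Elev_sub z δ ρ t)).trans_lt measure_ball_lt_top).ne

lemma int_trunc_le (hu : ContDiff ℝ 1 u) {z : Euc n} {δ ρ k t : ℝ} (hδ : 0 < δ)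
    (hρ : 0 < ρ) (ht : k ≤ t) (hub : ∀ x ∈ ball z ρ, u x ≤ k + 2 * δ) :
    ∫ x, trunc z ρ (Wf u z δ ρ t) x ≤ 2 * δ * volume.real (Elev u z δ ρ t) := by
  have hm := (Elev_open hu z δ ρ t).measurableSet
  have hi : Integrable ((Elev u z δ ρ t).indicator (fun _ => 2 * δ)) := by
    rw [integrable_indicator_iff hm]
    exact integrableOn_const (Elev_fin z δ ρ t)
  have h1 : ∫ x, (Elev u z δ ρ t).indicator (fun _ => 2 * δ) x
      = 2 * δ * volume.real (Elev u z δ ρ t) := by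
    rw [integral_indicator hm, setIntegral_const, smul_eq_mul, mul_comm]
  rw [← h1]
  refine integral_mono_of_nonneg (Eventually.of_forall (trunc_nonneg _ _ _)) hi
    (Eventually.of_forall ?_)
  intro x
  by_cases hx : x ∈ Elev u z δ ρ t
  · rw [indicator_of_mem hx]
    show trunc z ρ (Wf u z δ ρ t) x ≤ 2 * δ
    rw [trunc_in hx.1]
    refine max_le ?_ (by linarith)
    unfold Wf
    have : 0 ≤ 3 * δ / ρ ^ 2 * ‖x - z‖ ^ 2 := by positivity
    linarith [hub x hx.1]
  · rw [indicator_of_notMem hx]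
    show trunc z ρ (Wf u z δ ρ t) x ≤ 0
    by_cases hxb : x ∈ ball z ρ
    · rw [trunc_in hxb]
      refine max_le ?_ le_rfl
      by_contra hne
      exact hx ⟨hxb, by linarith⟩
    · rw [trunc_out hxb]

lemma trunc_ge_of_Elev {z : Euc n} {δ ρ t η : ℝ} {x : Euc n}
    (hx : x ∈ Elev u z δ ρ (t + η)) : η ≤ trunc z ρ (Wf u z δ ρ t) x := by
  rw [trunc_in hx.1]
  refine le_max_of_le_left ?_
  have := hx.2
  unfold Wf at this ⊢
  linarith

/-- constant for gradient bound -/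
def Kgr (p C₁ C₂ : ℝ) : ℝ := 14 + 2 * (Ken p C₁ C₂ / C₁)

lemma Ken_pos {p C₁ C₂ : ℝ} (h1 : 0 < C₁) (h2 : 0 < C₂) : 0 < Ken p C₁ C₂ := by
  unfold Ken; positivity

lemma grad_bound (D : Data n p C₁ C₂ α F b a u) {z : Euc n} {δ ρ k t B h : ℝ} (hδ : 0 < δ)
    (hρ : 0 < ρ) (ht : k ≤ t) (hub : ∀ x ∈ ball z ρ, u x ≤ k + 2 * δ)
    (hB0 : 0 ≤ B) (hB : ∀ᵐ x, x ∈ ball z ρ → b x ≤ B)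
    (hh0 : 0 ≤ h) (hh : ∀ᵐ x, x ∈ ball z ρ → k < u x → h ≤ a x)
    (hS : B * δ * (δ / ρ) ^ (α - p) ≤ C₁ / 4) :
    ∫ x, ‖gradient (fun x => trunc z ρ (Wf u z δ ρ t) x ^ (2:ℝ)) x‖ ≤
      Kgr p C₁ C₂ * (δ / ρ) * (2 * δ * volume.real (Elev u z δ ρ t)) := by
  have hC₁ := D.hC₁
  have hC₂ := D.hC₂
  have hp := D.hp
  have hK := Ken_pos (p := p) hC₁ hC₂
  have hd : 0 < δ / ρ := by positivity
  have hen := energy D hδ hρ ht hub hB0 hB hh hS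
  have hle := int_trunc_le D.hu hδ hρ ht hub
  set d := δ / ρ with hdd
  have hW := Wf_contDiff D.hu z δ ρ t
  have h56 : 5 / 6 * ρ < ρ := by linarith
  have h0 := Wf_neg (u := u) hδ hρ ht hub
  have hgc := gradient_continuous D.hu
  have hgr := fun x => trunc_pow_gradient hW h56 h0 one_lt_two x
  have ivN : Integrable (fun x => ‖gradient u x‖ ^ p * trunc z ρ (Wf u z δ ρ t) x) :=
    int_trunc_mul hW.continuous h56 h0 (hgc.norm.rpow_const (fun x => Or.inr (by linarith)))
  have iv : Integrable (fun x => trunc z ρ (Wf u z δ ρ t) x) := by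
    simpa using int_trunc_mul hW.continuous h56 h0 (continuous_const (y := (1:ℝ)))
  set v := trunc z ρ (Wf u z δ ρ t) with hv
  have hv0 : ∀ x, 0 ≤ v x := trunc_nonneg _ _ _
  have hI2 : 0 ≤ ∫ x, v x ^ 2 := integral_nonneg (fun x => by positivity)
  have hI1 : 0 ≤ ∫ x, v x := integral_nonneg hv0
  have hpt : ∀ x, ‖gradient (fun x => v x ^ (2:ℝ)) x‖ ≤
      14 * d * v x + 2 * d ^ (1 - p) * (‖gradient u x‖ ^ p * v x) := by
    intro x
    rw [hgr x, norm_smul, show (2:ℝ) - 1 = 1 by norm_num, Real.rpow_one,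
      Real.norm_of_nonneg (by have := hv0 x; positivity)]
    by_cases hxb : x ∈ ball z ρ
    · have hxz : ‖x - z‖ ≤ ρ := by rw [← dist_eq_norm]; exact (mem_ball.1 hxb).le
      have e1 : ‖gradient (Wf u z δ ρ t) x‖ ≤ ‖gradient u x‖ + 6 * d := by
        rw [Wf_gradient D.hu]
        refine (norm_sub_le _ _).trans ?_
        rw [norm_smul, Real.norm_of_nonneg (by positivity)]
        have : 6 * δ / ρ ^ 2 * ‖x - z‖ ≤ 6 * δ / ρ ^ 2 * ρ := by gcongr
        have e : 6 * δ / ρ ^ 2 * ρ = 6 * d := by rw [hdd]; field_simp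
        linarith
      have e2 := young2 (norm_nonneg (gradient u x)) hd zero_le_one hp.le
      rw [Real.rpow_one, Real.rpow_one] at e2
      have := hv0 x
      calc 2 * v x * ‖gradient (Wf u z δ ρ t) x‖ ≤
          2 * v x * (7 * d + d ^ (1 - p) * ‖gradient u x‖ ^ p) := by
            gcongr; linarith
        _ = _ := by ring
    · have : v x = 0 := trunc_out hxb
      rw [this]; simp
  calc ∫ x, ‖gradient (fun x => v x ^ (2:ℝ)) x‖ ≤
      ∫ x, (14 * d * v x + 2 * d ^ (1 - p) * (‖gradient u x‖ ^ p * v x)) := by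
        refine integral_mono_of_nonneg (Eventually.of_forall (fun x => norm_nonneg _))
          ((iv.const_mul _).add (ivN.const_mul _)) (Eventually.of_forall hpt)
    _ = 14 * d * (∫ x, v x) + 2 * d ^ (1 - p) * ∫ x, ‖gradient u x‖ ^ p * v x := by
        rw [← integral_const_mul, ← integral_const_mul]
        exact integral_add (iv.const_mul _) (ivN.const_mul _)
    _ ≤ 14 * d * (∫ x, v x) + 2 * d ^ (1 - p) * (Ken p C₁ C₂ * d ^ p * (∫ x, v x) / C₁) := by
        gcongr
        rw [le_div_iff₀ hC₁]
        have : 0 ≤ h * ∫ x, v x ^ 2 := by positivity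
        linarith
    _ = Kgr p C₁ C₂ * d * (∫ x, v x) := by
        have : d ^ (1 - p) * d ^ p = d := by
          rw [← Real.rpow_add hd]; simp
        unfold Kgr
        calc _ = 14 * d * (∫ x, v x) + 2 * (d ^ (1 - p) * d ^ p) * (Ken p C₁ C₂ / C₁) * (∫ x, v x) := by
              ring
          _ = _ := by rw [this]; ring
    _ ≤ _ := by
        have : 0 ≤ Kgr p C₁ C₂ := by unfold Kgr; positivity
        gcongr

end

lemma growth {n : ℕ} (hn : 2 ≤ n) {p C₁ C₂ : ℝ} (hC₁ : 0 < C₁) (hC₂ : 0 < C₂) :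
    ∃ K : ℝ, 1 ≤ K ∧ ∀ (α : ℝ) (F : Euc n → Euc n) (b a u : Euc n → ℝ),
    Data n p C₁ C₂ α F b a u → ∀ (z : Euc n) (δ ρ k B h : ℝ), 0 < δ → 0 < ρ →
    u z = k + δ → (∀ x ∈ ball z ρ, u x ≤ k + 2 * δ) → 0 ≤ B →
    (∀ᵐ x, x ∈ ball z ρ → b x ≤ B) → 0 ≤ h → (∀ᵐ x, x ∈ ball z ρ → k < u x → h ≤ a x) →
    B * δ * (δ / ρ) ^ (α - p) ≤ C₁ / 4 → h * ρ ^ p ≤ K * δ ^ (p - 1) := by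
  obtain ⟨S, hS0, hS⟩ := sobolev_real hn
  have hn' : (2:ℝ) ≤ n := by exact_mod_cast hn
  set s : ℝ := (n:ℝ) / (n - 1) with hs
  have hs1 : 1 < s := by rw [hs, lt_div_iff₀ (by linarith)]; linarith
  have hs0 : 0 < s := by linarith
  have hKg : 0 < Kgr p C₁ C₂ := by
    have := Ken_pos (p := p) hC₁ hC₂
    unfold Kgr; positivity
  have hKe := Ken_pos (p := p) hC₁ hC₂
  obtain ⟨ε, hε0, hε⟩ := iter_lemma (c := S * (32 * Kgr p C₁ C₂) ^ s) (s := s) (by positivity) hs1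
  set ω : ℝ := volume.real (ball (0 : Euc n) 1) with hω
  have hω0 : 0 ≤ ω := measureReal_nonneg
  refine ⟨32 * Ken p C₁ C₂ * ω / ε + 1, by
    have : 0 ≤ 32 * Ken p C₁ C₂ * ω / ε := by positivity
    linarith, ?_⟩
  intro α F b a u D z δ ρ k B h hδ hρ huz hub hB0 hB hh0 hh hSB
  set m : ℝ → ℝ := fun t => volume.real (Elev u z δ ρ t) with hm
  have hm0 : ∀ t, 0 ≤ m t := fun t => measureReal_nonneg
  have step : ∀ t η, k ≤ t → 0 < η →
      (η ^ 2) ^ s * m (t + η) ≤ S * (Kgr p C₁ C₂ * (δ / ρ) * (2 * δ * m t)) ^ s := by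
    intro t η ht hη
    have h56 : 5 / 6 * ρ < ρ := by linarith
    have h0 := Wf_neg (u := u) hδ hρ ht hub
    have hW := Wf_contDiff D.hu z δ ρ t
    refine hS (fun x => trunc z ρ (Wf u z δ ρ t) x ^ (2:ℝ))
      (trunc_pow_contDiff hW h56 h0 one_lt_two) (trunc_compact 2 two_pos) _
      (Elev_open D.hu z δ ρ (t + η)).measurableSet (η ^ 2) (by positivity) ?_ _
      (grad_bound D hδ hρ ht hub hB0 hB hh0 hh hSB)
    intro x hx
    have := trunc_ge_of_Elev hx
    rw [Real.rpow_two]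
    gcongr
  set y : ℕ → ℝ := fun j => m (k + δ / 4 + δ / 2 * (1 - (1 / 2) ^ j)) / ρ ^ n with hy
  have hy0 : ∀ j, 0 ≤ y j := fun j => div_nonneg (hm0 _) (by positivity)
  have hρs : (ρ ^ s) ^ (1:ℕ) * ρ ^ n = (ρ ^ n) ^ s := by
    rw [pow_one, ← Real.rpow_natCast, ← Real.rpow_add hρ, ← Real.rpow_mul hρ.le]
    congr 1
    have : (n:ℝ) - 1 ≠ 0 := (show (0:ℝ) < n - 1 by linarith).ne'
    rw [hs]; field_simp; ring
  rw [pow_one] at hρs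
  have hrec : ∀ j, y (j + 1) ≤ S * (32 * Kgr p C₁ C₂) ^ s * (4 ^ j * y j) ^ s := by
    intro j
    have hpj : (0:ℝ) < (1 / 2) ^ j := by positivity
    have hpj1 : ((1:ℝ) / 2) ^ j ≤ 1 := pow_le_one₀ (by norm_num) (by norm_num)
    have h1 := step (k + δ / 4 + δ / 2 * (1 - (1 / 2) ^ j)) (δ / 4 * (1 / 2) ^ j)
      (by nlinarith) (by positivity)
    rw [show k + δ / 4 + δ / 2 * (1 - (1 / 2) ^ j) + δ / 4 * (1 / 2) ^ j
      = k + δ / 4 + δ / 2 * (1 - (1 / 2) ^ (j + 1)) by ring] at h1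
    have e1 : m (k + δ / 4 + δ / 2 * (1 - (1 / 2) ^ (j + 1))) = ρ ^ n * y (j + 1) := by
      simp only [hy]; field_simp
    have e2 : m (k + δ / 4 + δ / 2 * (1 - (1 / 2) ^ j)) = ρ ^ n * y j := by
      simp only [hy]; field_simp
    rw [e1, e2] at h1
    set P : ℝ := (1 / 2) ^ j with hP
    have hP4 : (4:ℝ) ^ j * P ^ 2 = 1 := by
      rw [hP, ← pow_mul, mul_comm j 2, pow_mul, ← mul_pow]; norm_num
    have e3 : Kgr p C₁ C₂ * (δ / ρ) * (2 * δ * (ρ ^ n * y j)) =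
        ((δ / 4 * P) ^ 2) * (ρ ^ n * ρ⁻¹) * (32 * Kgr p C₁ C₂ * (4 ^ j * y j)) := by
      calc _ = Kgr p C₁ C₂ * (δ / ρ) * (2 * δ * (ρ ^ n * y j)) * ((4:ℝ) ^ j * P ^ 2) := by
            rw [hP4]; ring
        _ = _ := by ring
    have hyj := hy0 j
    rw [e3, Real.mul_rpow (by positivity) (by positivity),
      Real.mul_rpow (by positivity) (by positivity),
      Real.mul_rpow (x := ρ ^ n) (by positivity) (by positivity),
      Real.mul_rpow (x := 32 * Kgr p C₁ C₂) (by positivity) (by positivity), ← hρs,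
      Real.inv_rpow hρ.le] at h1
    have hX : 0 < ((δ / 4 * P) ^ 2) ^ s * ρ ^ n := by positivity
    have hρs0 : 0 < ρ ^ s := by positivity
    refine le_of_mul_le_mul_left ?_ hX
    calc _ = ((δ / 4 * P) ^ 2) ^ s * (ρ ^ n * y (j + 1)) := by ring
      _ ≤ _ := h1
      _ = _ := by field_simp
  have hylow : ε < y 0 := by
    by_contra hle
    push Not at hle
    have hlim := hε y hy0 hrec hle
    have hpos : 0 < m (k + 3 * δ / 4) := by
      refine ENNReal.toReal_pos ?_ (Elev_fin _ _ _ _)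
      refine ((Elev_open D.hu z δ ρ _).measure_pos volume ⟨z, mem_ball_self hρ, ?_⟩).ne'
      unfold Wf
      simp only [sub_self, norm_zero]
      rw [huz]; norm_num; linarith
    have hge : ∀ j, m (k + 3 * δ / 4) / ρ ^ n ≤ y j := by
      intro j
      have : m (k + 3 * δ / 4) ≤ m (k + δ / 4 + δ / 2 * (1 - (1 / 2) ^ j)) := by
        refine measureReal_mono ?_ (Elev_fin _ _ _ _)
        intro x hx
        refine ⟨hx.1, ?_⟩
        have h2 := hx.2
        unfold Wf at h2 ⊢
        have hpj : (0:ℝ) < (1 / 2) ^ j := by positivity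
        nlinarith
      simp only [hy]
      gcongr
    have := ge_of_tendsto' hlim hge
    have h3 : 0 < m (k + 3 * δ / 4) / ρ ^ n := by positivity
    linarith
  have hmlow : ε * ρ ^ n ≤ m (k + δ / 4) := by
    have : y 0 = m (k + δ / 4) / ρ ^ n := by simp [hy]
    rw [this, lt_div_iff₀ (by positivity)] at hylow
    exact hylow.le
  have hen := energy D hδ hρ (le_refl k) hub hB0 hB hh hSB
  have hI : ∫ x, trunc z ρ (Wf u z δ ρ k) x ≤ 2 * δ * (ρ ^ n * ω) := by
    refine (int_trunc_le D.hu hδ hρ (le_refl k) hub).trans ?_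
    have h1 : volume.real (Elev u z δ ρ k) ≤ volume.real (ball z ρ) :=
      measureReal_mono (Elev_sub _ _ _ _) measure_ball_lt_top.ne
    have h2 : volume.real (ball z ρ) = ρ ^ n * ω := by
      rw [measureReal_def, Measure.addHaar_ball_of_pos volume z hρ, finrank_euclideanSpace_fin,
        ENNReal.toReal_mul, ENNReal.toReal_ofReal (by positivity)]
      rfl
    rw [h2] at h1
    gcongr
  have hI2 : (δ / 4) ^ 2 * m (k + δ / 4) ≤ ∫ x, trunc z ρ (Wf u z δ ρ k) x ^ 2 := by
    have h56 : 5 / 6 * ρ < ρ := by linarith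
    have h0 := Wf_neg (u := u) hδ hρ (le_refl k) hub
    have hW := Wf_contDiff D.hu z δ ρ k
    have hvc := trunc_continuous hW.continuous h56 h0
    have iv2 : Integrable (fun x => trunc z ρ (Wf u z δ ρ k) x ^ 2) := by
      simpa [pow_two] using int_trunc_mul hW.continuous h56 h0 hvc
    have hmE := (Elev_open D.hu z δ ρ (k + δ / 4)).measurableSet
    calc (δ / 4) ^ 2 * m (k + δ / 4) = ∫ x in Elev u z δ ρ (k + δ / 4), (δ / 4) ^ 2 := by
          rw [setIntegral_const, smul_eq_mul, mul_comm]
      _ ≤ ∫ x in Elev u z δ ρ (k + δ / 4), trunc z ρ (Wf u z δ ρ k) x ^ 2 := by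
          refine setIntegral_mono_on (integrableOn_const (Elev_fin _ _ _ _)) iv2.integrableOn hmE ?_
          intro x hx
          have := trunc_ge_of_Elev hx
          gcongr
      _ ≤ _ := setIntegral_le_integral iv2 (Eventually.of_forall (fun x => by positivity))
  have hgN : 0 ≤ ∫ x, ‖gradient u x‖ ^ p * trunc z ρ (Wf u z δ ρ k) x :=
    integral_nonneg (fun x => mul_nonneg (by positivity) (trunc_nonneg _ _ _ _))
  have hfin : h * ((δ / 4) ^ 2 * (ε * ρ ^ n)) ≤
      Ken p C₁ C₂ * (δ / ρ) ^ p * (2 * δ * (ρ ^ n * ω)) := by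
    calc h * ((δ / 4) ^ 2 * (ε * ρ ^ n)) ≤ h * ((δ / 4) ^ 2 * m (k + δ / 4)) := by gcongr
      _ ≤ h * ∫ x, trunc z ρ (Wf u z δ ρ k) x ^ 2 := by gcongr
      _ ≤ Ken p C₁ C₂ * (δ / ρ) ^ p * ∫ x, trunc z ρ (Wf u z δ ρ k) x := by
          have : 0 ≤ C₁ * (∫ x, ‖gradient u x‖ ^ p * trunc z ρ (Wf u z δ ρ k) x) := by positivity
          linarith
      _ ≤ _ := by gcongr
  rw [Real.div_rpow hδ.le hρ.le] at hfin
  have eδ : δ ^ p = δ ^ (p - 1) * δ := by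
    rw [← Real.rpow_add_one hδ.ne']; congr 1; ring
  rw [eδ] at hfin
  have hρp : 0 < ρ ^ p := by positivity
  have hδp : 0 < δ ^ (p - 1) := by positivity
  have : h * ρ ^ p ≤ 32 * Ken p C₁ C₂ * ω / ε * δ ^ (p - 1) := by
    rw [div_mul_eq_mul_div, le_div_iff₀ hε0]
    have hX : 0 < δ ^ 2 * ρ ^ n / 16 / ρ ^ p := by positivity
    refine le_of_mul_le_mul_left ?_ hX
    calc δ ^ 2 * ρ ^ n / 16 / ρ ^ p * (h * ρ ^ p * ε) = h * ((δ / 4) ^ 2 * (ε * ρ ^ n)) := by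
          field_simp; ring
      _ ≤ _ := hfin
      _ = _ := by field_simp; ring
  linarith

section
variable {n : ℕ} {p C₁ C₂ α : ℝ} {F : Euc n → Euc n} {b a u : Euc n → ℝ}

lemma young3 {N w p B C₁ : ℝ} (hN : 0 ≤ N) (hw : 0 ≤ w) (hp : 1 < p) (hB : 0 < B) (h1 : 0 < C₁) :
    B * N ^ (p - 1) * w ≤ C₁ * N ^ p + B * (B / C₁) ^ (p - 1) * w ^ p := by
  rcases hN.eq_or_lt with hN0 | hN0
  · rw [← hN0, Real.zero_rpow (by linarith)]
    simp only [mul_zero, zero_mul]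
    positivity
  have e : N ^ p = N ^ (p - 1) * N := by
    rw [← Real.rpow_add_one hN0.ne']; congr 1; ring
  by_cases h : B * w ≤ C₁ * N
  · have h3 : 0 ≤ B * (B / C₁) ^ (p - 1) * w ^ p := by positivity
    have : N ^ (p - 1) * (B * w) ≤ N ^ (p - 1) * (C₁ * N) := by gcongr
    rw [e]; linarith
  · push Not at h
    have hw0 : 0 < w := by
      by_contra hne
      have : w = 0 := by linarith
      rw [this] at h
      have : 0 < C₁ * N := by positivity
      linarith
    have e' : w ^ p = w ^ (p - 1) * w := by
      rw [← Real.rpow_add_one hw0.ne']; congr 1; ring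
    have h3 : N ≤ B / C₁ * w := by
      rw [div_mul_eq_mul_div, le_div_iff₀ h1]; linarith
    have h4 : N ^ (p - 1) ≤ (B / C₁) ^ (p - 1) * w ^ (p - 1) := by
      rw [← Real.mul_rpow (by positivity) hw]
      exact Real.rpow_le_rpow hN h3 (by linarith)
    have h5 : B * N ^ (p - 1) * w ≤ B * ((B / C₁) ^ (p - 1) * w ^ (p - 1)) * w := by gcongr
    have h6 : 0 ≤ C₁ * N ^ p := by positivity
    rw [e']; linarith

lemma young4 {N w p : ℝ} (hN : 0 ≤ N) (hw : 0 ≤ w) (hp : 1 < p) :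
    w ^ p * N ≤ w ^ (p + 1) + N ^ p * w := by
  by_cases h : N ≤ w
  · have e : w ^ (p + 1) = w ^ p * w := Real.rpow_add_one' hw (by linarith)
    have : w ^ p * N ≤ w ^ p * w := by gcongr
    have h3 : 0 ≤ N ^ p * w := by positivity
    linarith
  · push Not at h
    have hN0 : 0 < N := by linarith
    have e1 : w ^ p = w ^ (p - 1) * w := by
      rw [← Real.rpow_add_one' hw (by linarith)]; congr 1; ring
    have e2 : N ^ p = N ^ (p - 1) * N := by
      rw [← Real.rpow_add_one' hN (by linarith)]; congr 1; ring
    have : w ^ (p - 1) ≤ N ^ (p - 1) := Real.rpow_le_rpow hw h.le (by linarith)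
    have h3 : 0 ≤ w ^ (p + 1) := by positivity
    have h4 : w ^ (p - 1) * w * N ≤ N ^ (p - 1) * w * N := by gcongr
    rw [e1, e2]; linarith

/-- gradient estimate near the maximum -/
lemma maxP_grad (D : Data n p C₁ C₂ α F b a u) {r : ℝ} :
    ∃ C : ℝ, 0 < C ∧ ∀ ρ' κ : ℝ, ρ' < r →
      (∀ x, ρ' < dist x 0 → dist x 0 < r → u x - κ ≤ 0) →
      ∫ x, ‖gradient (fun x => trunc 0 r (fun x => u x - κ) x ^ (p + 1)) x‖ ≤
        C * ∫ x in {x | gradient u x ≠ 0}, trunc 0 r (fun x => u x - κ) x ^ (p + 1) := by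
  have hC₁ := D.hC₁
  have hp := D.hp
  have hgc := gradient_continuous D.hu
  obtain ⟨L, hL⟩ := (isCompact_closedBall (0 : Euc n) r).exists_bound_of_continuousOn
    hgc.continuousOn
  obtain ⟨B0, hB0⟩ := D.hbloc _ (isCompact_closedBall (0 : Euc n) r)
  set B : ℝ := |B0| * |L| ^ (α - p + 1) + 1 with hB
  have hBp : 0 < B := by positivity
  set C : ℝ := B * (B / C₁) ^ (p - 1) with hC
  have hCp : 0 < C := by positivity
  refine ⟨(p + 1) * (1 + C / C₁), by positivity, ?_⟩
  intro ρ' κ hρ' h0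
  have hW : ContDiff ℝ 1 (fun x => u x - κ) := D.hu.sub contDiff_const
  have hgrW : ∀ x, gradient (fun x => u x - κ) x = gradient u x := by
    intro x; simp [gradient, fderiv_sub_const]
  have hgr := fun x => trunc_pow_gradient hW hρ' h0 (show 1 < p + 1 by linarith) x
  have hE : MeasurableSet {x | gradient u x ≠ 0} :=
    (isOpen_ne.preimage hgc).measurableSet
  have hcd := trunc_pow_contDiff hW hρ' h0 (show 1 < p + 1 by linarith)
  have hcc := trunc_compact (z := (0 : Euc n)) (ρ := r) (W := fun x => u x - κ) (p + 1) (by linarith)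
  have ivN : Integrable (fun x => ‖gradient u x‖ ^ p * trunc 0 r (fun x => u x - κ) x) :=
    int_trunc_mul hW.continuous hρ' h0 (hgc.norm.rpow_const (fun x => Or.inr (by linarith)))
  have key0 := fun Φ hΦ h2 => tested D hW hρ' h0 one_lt_two (fun x => 0) Φ
    (integrable_zero _ _ _) hΦ (Eventually.of_forall (fun x =>
      mul_nonneg (D.ha0 x) (Real.rpow_nonneg (trunc_nonneg _ _ _ _) _))) h2
  set w := trunc (0 : Euc n) r (fun x => u x - κ) with hw
  have hw0 : ∀ x, 0 ≤ w x := trunc_nonneg _ _ _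
  set E := {x | gradient u x ≠ 0} with hEE
  have ifE : Integrable (E.indicator (fun x => w x ^ (p + 1))) :=
    (hcd.continuous.integrable_of_hasCompactSupport hcc).indicator hE
  have key := key0 (fun x => C * E.indicator (fun x => w x ^ (p + 1)) x
      - C₁ * (‖gradient u x‖ ^ p * w x)) ((ifE.const_mul _).sub (ivN.const_mul _)) ?_
  · rw [integral_sub (ifE.const_mul _) (ivN.const_mul _)] at key
    simp only [integral_const_mul, integral_zero] at key
    rw [← integral_indicator hE]
    have hpt : ∀ x, ‖gradient (fun x => w x ^ (p + 1)) x‖ ≤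
        (p + 1) * (E.indicator (fun x => w x ^ (p + 1)) x + ‖gradient u x‖ ^ p * w x) := by
      intro x
      rw [hgr x, hgrW, norm_smul, Real.norm_of_nonneg (by have := hw0 x; positivity),
        add_sub_cancel_right, mul_assoc]
      gcongr
      by_cases hx : x ∈ E
      · rw [indicator_of_mem hx]
        exact young4 (norm_nonneg _) (hw0 x) hp
      · rw [indicator_of_notMem hx]
        have : gradient u x = 0 := by simpa [hEE] using hx
        rw [this, norm_zero, mul_zero]
        have := hw0 x
        positivity
    calc ∫ x, ‖gradient (fun x => w x ^ (p + 1)) x‖ ≤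
        ∫ x, (p + 1) * (E.indicator (fun x => w x ^ (p + 1)) x + ‖gradient u x‖ ^ p * w x) :=
          integral_mono_of_nonneg (Eventually.of_forall (fun x => norm_nonneg _))
            ((ifE.add ivN).const_mul _) (Eventually.of_forall hpt)
      _ = (p + 1) * ((∫ x, E.indicator (fun x => w x ^ (p + 1)) x) +
            ∫ x, ‖gradient u x‖ ^ p * w x) := by
          rw [integral_const_mul, integral_add ifE ivN]
      _ ≤ (p + 1) * ((∫ x, E.indicator (fun x => w x ^ (p + 1)) x) +
            C / C₁ * ∫ x, E.indicator (fun x => w x ^ (p + 1)) x) := by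
          gcongr
          rw [div_mul_eq_mul_div, le_div_iff₀ hC₁]
          linarith
      _ = _ := by ring
  · refine Eventually.of_forall (fun x => ?_)
    rw [hgrW, show (2:ℝ) - 1 = 1 by norm_num, Real.rpow_one, Real.rpow_two]
    have hwx := hw0 x
    by_cases hxb : x ∈ ball (0 : Euc n) r
    swap
    · have : w x = 0 := trunc_out hxb
      have h3 : (0:ℝ) ^ (p + 1) = 0 := Real.zero_rpow (by linarith)
      have h4 : E.indicator (fun x => w x ^ (p + 1)) x = 0 := by
        by_cases hx : x ∈ E
        · rw [indicator_of_mem hx, this, h3]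
        · rw [indicator_of_notMem hx]
      rw [this, h4]; simp
    have hxc := ball_subset_closedBall hxb
    set N := ‖gradient u x‖ with hN
    have hN0 : 0 ≤ N := norm_nonneg _
    have e1 : C₁ * N ^ p ≤ ⟪F x, gradient u x⟫ := by
      rw [real_inner_comm]; exact D.hF1 x
    by_cases hx : x ∈ E
    · rw [indicator_of_mem hx]
      have e2 : b x * N ^ α ≤ B * N ^ (p - 1) := by
        have : N ^ α = N ^ (α - p + 1) * N ^ (p - 1) := by
          rw [← Real.rpow_add_of_nonneg hN0 (by linarith [D.hα₁]) (by linarith)]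
          congr 1; ring
        rw [this, ← mul_assoc]
        have hbb : b x ≤ |B0| := (hB0 x hxc).trans (le_abs_self _)
        have hLL : N ≤ |L| := (hL x hxc).trans (le_abs_self _)
        have h5 : N ^ (α - p + 1) ≤ |L| ^ (α - p + 1) :=
          Real.rpow_le_rpow hN0 hLL (by linarith [D.hα₁])
        have h6 : b x * N ^ (α - p + 1) ≤ |B0| * |L| ^ (α - p + 1) :=
          mul_le_mul hbb h5 (by positivity) (by positivity)
        gcongr
        linarith
      have e3 := young3 hN0 hwx hp hBp hC₁
      have e4 : w x ^ (p + 1) = w x ^ p * w x := Real.rpow_add_one' hwx (by linarith)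
      rw [e4]
      have e5 : b x * N ^ α * w x ^ 2 ≤ (C₁ * N ^ p + C * w x ^ p) * w x := by
        calc b x * N ^ α * w x ^ 2 ≤ B * N ^ (p - 1) * w x ^ 2 := by gcongr
          _ = (B * N ^ (p - 1) * w x) * w x := by ring
          _ ≤ _ := by gcongr
      have e6 : 2 * w x * (C₁ * N ^ p) ≤ 2 * w x * ⟪F x, gradient u x⟫ := by gcongr
      linarith
    · rw [indicator_of_notMem hx]
      have h7 : gradient u x = 0 := by simpa [hEE] using hx
      have h8 : N = 0 := by rw [hN, h7, norm_zero]
      rw [h8, h7, inner_zero_right]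
      by_cases hα : α = 0
      · exfalso; linarith [D.hα₁]
      · rw [Real.zero_rpow hα, Real.zero_rpow (by linarith)]; simp

end

lemma sob_holder {n : ℕ} (hn : 2 ≤ n) {C : ℝ} (hC : 0 ≤ C) : ∃ K : ℝ≥0∞, K ≠ ⊤ ∧
    ∀ f : Euc n → ℝ, ContDiff ℝ 1 f → HasCompactSupport f → (∀ x, 0 ≤ f x) → (∃ x, f x ≠ 0) →
    ∀ G : Set (Euc n), MeasurableSet G → (∫ x, ‖gradient f x‖) ≤ C * ∫ x in G, f x →
    1 ≤ K * (volume G) ^ ((1:ℝ) / (n - 1)) := by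
  set s : ℝ := (n:ℝ) / (n - 1) with hs
  have hn' : (2:ℝ) ≤ n := by exact_mod_cast hn
  have hs0 : 0 < s := by apply div_pos <;> linarith
  set S0 := lintegralPowLePowLIntegralFDerivConst (volume : Measure (Euc n)) s
  refine ⟨(S0:ℝ≥0∞) * ENNReal.ofReal C ^ s, ENNReal.mul_ne_top (by simp)
    (ENNReal.rpow_ne_top_of_nonneg hs0.le ENNReal.ofReal_ne_top), ?_⟩
  intro f hf hfc hf0 ⟨x0, hx0⟩ G hG hX
  have hconj0 : Real.HolderConjugate (n:ℝ) s :=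
    Real.HolderConjugate.conjExponent (by linarith)
  have hconj : Real.HolderConjugate (Module.finrank ℝ (Euc n)) s := by
    rw [finrank_euclideanSpace_fin]; exact hconj0
  have h1 := lintegral_pow_le_pow_lintegral_fderiv (volume : Measure (Euc n)) hf hfc hconj
  have hfi : Integrable f := hf.continuous.integrable_of_hasCompactSupport hfc
  have hen : ∀ x, ‖f x‖ₑ = ENNReal.ofReal (f x) := fun x => Real.enorm_eq_ofReal (hf0 x)
  have h2 : (∫⁻ x, ‖fderiv ℝ f x‖ₑ) ≤ ENNReal.ofReal C * ∫⁻ x in G, ‖f x‖ₑ := by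
    have hIntF : Integrable (fderiv ℝ f) :=
      (hf.continuous_fderiv one_ne_zero).integrable_of_hasCompactSupport (hfc.fderiv ℝ)
    have : (∫⁻ x, ‖fderiv ℝ f x‖ₑ) = ENNReal.ofReal (∫ x, ‖fderiv ℝ f x‖) :=
      (ofReal_integral_norm_eq_lintegral_enorm hIntF).symm
    rw [this]
    have e : (∫⁻ x in G, ‖f x‖ₑ) = ENNReal.ofReal (∫ x in G, f x) := by
      rw [ofReal_integral_eq_lintegral_ofReal hfi.integrableOn (Eventually.of_forall hf0)]
      simp only [hen]
    rw [e, ← ENNReal.ofReal_mul hC]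
    apply ENNReal.ofReal_le_ofReal
    refine le_trans (le_of_eq ?_) hX
    congr 1
    ext x
    rw [gradient, LinearIsometryEquiv.norm_map]
  set I := ∫⁻ x, ‖f x‖ₑ ^ s with hI
  have h3 : (∫⁻ x in G, ‖f x‖ₑ) ≤ volume G ^ (1 / (n:ℝ)) * I ^ (1 / s) := by
    have h4 := ENNReal.lintegral_mul_le_Lp_mul_Lq volume hconj0
      (f := G.indicator (fun _ => (1:ℝ≥0∞))) (g := fun x => ‖f x‖ₑ)
      ((measurable_const.indicator hG).aemeasurable) hf.continuous.measurable.enorm.aemeasurable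
    have e1 : (∫⁻ x, (G.indicator (fun _ => (1:ℝ≥0∞)) * fun x => ‖f x‖ₑ) x) = ∫⁻ x in G, ‖f x‖ₑ := by
      rw [← lintegral_indicator hG]
      congr 1
      ext x
      by_cases hx : x ∈ G <;> simp [hx]
    have e2 : (∫⁻ x, (G.indicator (fun _ => (1:ℝ≥0∞)) x) ^ (n:ℝ)) = volume G := by
      rw [← lintegral_indicator_one hG]
      congr 1
      ext x
      by_cases hx : x ∈ G
      · simp [hx]
      · simp only [indicator_of_notMem hx]
        exact ENNReal.zero_rpow_of_pos (by linarith)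
    rw [e1, e2] at h4
    exact h4
  have hI0 : I ≠ 0 := by
    rw [hI, Ne, lintegral_eq_zero_iff (by
      exact (hf.continuous.measurable.enorm.pow_const s))]
    intro hae
    have hae' : f =ᵐ[volume] 0 := by
      filter_upwards [hae] with x hx
      have : ‖f x‖ₑ ^ s = 0 := hx
      rw [ENNReal.rpow_eq_zero_iff_of_pos hs0] at this
      simpa using this
    have := (Continuous.ae_eq_iff_eq volume hf.continuous continuous_zero).1 hae'
    exact hx0 (congrFun this x0)
  have hIt : I ≠ ⊤ := by
    have hGf : (∫⁻ x, ‖fderiv ℝ f x‖ₑ) ≠ ⊤ := by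
      have hIntF : Integrable (fderiv ℝ f) :=
        (hf.continuous_fderiv one_ne_zero).integrable_of_hasCompactSupport (hfc.fderiv ℝ)
      exact hIntF.2.ne
    refine (h1.trans_lt ?_).ne
    exact ENNReal.mul_lt_top (by simp) (ENNReal.rpow_lt_top_of_nonneg hs0.le hGf)
  have h5 : I ≤ (S0:ℝ≥0∞) * ENNReal.ofReal C ^ s * volume G ^ ((1:ℝ) / (n - 1)) * I := by
    calc I ≤ S0 * (∫⁻ x, ‖fderiv ℝ f x‖ₑ) ^ s := h1
      _ ≤ S0 * (ENNReal.ofReal C * (volume G ^ (1 / (n:ℝ)) * I ^ (1 / s))) ^ s := by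
          gcongr
          exact h2.trans (by gcongr)
      _ = _ := by
          rw [ENNReal.mul_rpow_of_nonneg _ _ hs0.le, ENNReal.mul_rpow_of_nonneg _ _ hs0.le,
            ← ENNReal.rpow_mul, ← ENNReal.rpow_mul, one_div_mul_cancel hs0.ne', ENNReal.rpow_one]
          have : 1 / (n:ℝ) * s = 1 / (n - 1) := by
            have : (n:ℝ) - 1 ≠ 0 := (show (0:ℝ) < n - 1 by linarith).ne'
            rw [hs]; field_simp
          rw [this]
          ring
  have h6 : 1 * I ≤ (S0:ℝ≥0∞) * ENNReal.ofReal C ^ s * volume G ^ ((1:ℝ) / (n - 1)) * I := by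
    rwa [one_mul]
  exact (ENNReal.mul_le_mul_iff_left hI0 hIt).1 h6

section
variable {n : ℕ} {p C₁ C₂ α : ℝ} {F : Euc n → Euc n} {b a u : Euc n → ℝ}

lemma maxP (D : Data n p C₁ C₂ α F b a u) {r : ℝ} (hr : 0 < r) {x : Euc n} (hx : ‖x‖ ≤ r) :
    ∃ z : Euc n, ‖z‖ = r ∧ u x ≤ u z := by
  by_contra hne
  push Not at hne
  have hp := D.hp
  have hn := D.hn
  have : Nontrivial (Euc n) := by
    have : Nonempty (Fin n) := ⟨⟨0, by omega⟩⟩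
    infer_instance
  have huc := D.hu.continuous
  obtain ⟨x1, hx1, hx1m⟩ := (isCompact_closedBall (0 : Euc n) r).exists_isMaxOn
    ⟨x, by simpa using hx⟩ huc.continuousOn
  obtain ⟨y, hy, hym⟩ := (isCompact_sphere (0 : Euc n) r).exists_isMaxOn
    (NormedSpace.sphere_nonempty.2 hr.le) huc.continuousOn
  have hK : u y < u x1 := by
    have h1 := hne y (by simpa using hy)
    have h2 : u x ≤ u x1 := hx1m (by simpa using hx)
    linarith
  set K := u x1 with hKK
  set μ := (u y + K) / 2 with hμ
  have hcomp : IsCompact (closedBall (0 : Euc n) r ∩ {x | μ ≤ u x}) :=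
    (isCompact_closedBall _ _).inter_right (isClosed_le continuous_const huc)
  obtain ⟨y2, hy2, hy2m⟩ := hcomp.exists_isMaxOn
    ⟨x1, hx1, by simp only [mem_ofPred_eq, hμ]; linarith⟩ continuous_norm.continuousOn
  have hρ' : ‖y2‖ < r := by
    rcases (show ‖y2‖ ≤ r by simpa using hy2.1).eq_or_lt with h | h
    · exfalso
      have h3 : u y2 ≤ u y := hym (by simpa using h)
      have h4 : μ ≤ u y2 := hy2.2
      linarith
    · exact h
  have hx1b : ‖x1‖ < r := by
    rcases (show ‖x1‖ ≤ r by simpa using hx1).eq_or_lt with h | h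
    · exfalso
      have h3 : u x1 ≤ u y := hym (by simpa using h)
      linarith
    · exact h
  have h0 : ∀ κ, μ ≤ κ → ∀ x : Euc n, ‖y2‖ < dist x 0 → dist x 0 < r → u x - κ ≤ 0 := by
    intro κ hκ x h1 h2
    rw [dist_zero_right] at h1 h2
    by_contra hlt
    push Not at hlt
    have h5 : ‖x‖ ≤ ‖y2‖ := hy2m ⟨by simpa using h2.le, by simp only [mem_ofPred_eq]; linarith⟩
    linarith
  obtain ⟨C, hC0, hC⟩ := maxP_grad D (r := r)
  obtain ⟨S, hS, hSob⟩ := sob_holder hn hC0.le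
  have hgc := gradient_continuous D.hu
  have hE : IsOpen {x | gradient u x ≠ 0} := isOpen_ne.preimage hgc
  set G : ℝ → Set (Euc n) := fun κ => {x | gradient u x ≠ 0} ∩ (ball 0 r ∩ {x | κ < u x}) with hG
  have hGo : ∀ κ, IsOpen (G κ) := fun κ => hE.inter (isOpen_ball.inter (isOpen_lt continuous_const huc))
  have main : ∀ κ, μ ≤ κ → κ < K → 1 ≤ S * volume (G κ) ^ ((1:ℝ) / (n - 1)) := by
    intro κ h1 h2
    have hW : ContDiff ℝ 1 (fun x => u x - κ) := D.hu.sub contDiff_const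
    refine hSob (fun x => trunc 0 r (fun x => u x - κ) x ^ (p + 1))
      (trunc_pow_contDiff hW hρ' (h0 κ h1) (by linarith)) (trunc_compact _ (by linarith))
      (fun x => Real.rpow_nonneg (trunc_nonneg _ _ _ _) _) ⟨x1, ?_⟩ (G κ) (hGo κ).measurableSet ?_
    · have : trunc 0 r (fun x => u x - κ) x1 = K - κ := by
        rw [trunc_in (by simpa using hx1b), max_eq_left (by linarith)]
      simp only [this]
      exact (Real.rpow_pos_of_pos (by linarith) _).ne'
    · refine (hC _ κ hρ' (h0 κ h1)).trans (le_of_eq ?_)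
      congr 1
      refine setIntegral_eq_of_subset_of_forall_sdiff_eq_zero hE.measurableSet inter_subset_left ?_
      intro x hx
      have : trunc 0 r (fun x => u x - κ) x = 0 := by
        by_cases hxb : x ∈ ball (0 : Euc n) r
        · rw [trunc_in hxb]
          apply max_eq_right
          by_contra hlt
          push Not at hlt
          exact hx.2 ⟨hx.1, hxb, by simp only [mem_ofPred_eq]; linarith⟩
        · exact trunc_out hxb
      rw [this, Real.zero_rpow (by linarith)]
  set κs : ℕ → ℝ := fun j => K - (K - μ) * (1 / 2) ^ j with hκs
  have hKμ : 0 < K - μ := by linarith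
  have hκ1 : ∀ j, μ ≤ κs j ∧ κs j < K := by
    intro j
    have hpj : (0:ℝ) < (1 / 2) ^ j := by positivity
    have hpj1 : ((1:ℝ) / 2) ^ j ≤ 1 := pow_le_one₀ (by norm_num) (by norm_num)
    constructor
    · simp only [hκs]; nlinarith
    · have : 0 < (K - μ) * (1 / 2) ^ j := by positivity
      simp only [hκs]; linarith
  have hlim := tendsto_measure_iInter_atTop (μ := volume) (s := fun j => G (κs j))
    (fun j => (hGo _).measurableSet.nullMeasurableSet) ?_ ⟨0, ?_⟩
  · have hemp : (⋂ j, G (κs j)) = ∅ := by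
      rw [eq_empty_iff_forall_notMem]
      intro x hx
      rw [mem_iInter] at hx
      have hxb : x ∈ ball (0 : Euc n) r := (hx 0).2.1
      have hge : K ≤ u x := by
        have ht : Tendsto κs atTop (nhds (K - (K - μ) * 0)) :=
          tendsto_const_nhds.sub ((tendsto_pow_atTop_nhds_zero_of_lt_one (by norm_num)
            (by norm_num)).const_mul _)
        rw [mul_zero, sub_zero] at ht
        exact le_of_tendsto' ht (fun j => (hx j).2.2.le)
      apply (hx 0).1
      have : IsLocalMax u x := by
        filter_upwards [isOpen_ball.mem_nhds hxb] with y hy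
        exact le_trans (hx1m (ball_subset_closedBall hy)) hge
      simp [gradient, this.fderiv_eq_zero]
    rw [hemp, measure_empty] at hlim
    have hn' : (2:ℝ) ≤ n := by exact_mod_cast hn
    have hexp : (0:ℝ) < 1 / (n - 1) := by apply div_pos <;> linarith
    have h7 : Tendsto (fun j => S * volume (G (κs j)) ^ ((1:ℝ) / (n - 1))) atTop
        (nhds (S * 0 ^ ((1:ℝ) / (n - 1)))) :=
      ENNReal.Tendsto.const_mul ((ENNReal.continuous_rpow_const.tendsto _).comp hlim) (Or.inr hS)
    rw [ENNReal.zero_rpow_of_pos hexp, mul_zero] at h7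
    have := ge_of_tendsto' h7 (fun j => main _ (hκ1 j).1 (hκ1 j).2)
    simp at this
  · intro i j hij x hx
    refine ⟨hx.1, hx.2.1, ?_⟩
    have h8 : κs i ≤ κs j := by
      have : ((1:ℝ) / 2) ^ j ≤ (1 / 2) ^ i := pow_le_pow_of_le_one (by norm_num) (by norm_num) hij
      simp only [hκs]; nlinarith
    exact lt_of_le_of_lt h8 hx.2.2
  · exact ((measure_mono (inter_subset_right.trans inter_subset_left)).trans_lt
      measure_ball_lt_top).ne

end

/-- the smallness condition for the lower-order term -/
lemma calc_B {p α β h ρ1 δ1 δ ρ c1 K : ℝ} (hp : 1 < p) (hα₁ : p - 1 ≤ α) (hα₂ : α ≤ p)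
    (hβ : 0 ≤ β) (hh : 0 < h) (hρ1 : 0 < ρ1) (hδ1 : 0 < δ1) (hδ : 0 < δ) (hρ : 0 < ρ)
    (hδδ : δ ≤ δ1) (hρρ : ρ ≤ ρ1) (hK : 1 ≤ K) (hc1 : 0 < c1) (hc1' : c1 ≤ 1)
    (e1 : δ1 ^ (p - 1) = h * ρ1 ^ p / (2 * K))
    (e2 : β * h ^ ((α - p + 1) / α) * ρ1 ≤ c1) :
    β ^ (α / (p - 1)) * δ * (δ / ρ) ^ (α - p) ≤ c1 := by
  have hp1 : 0 < p - 1 := by linarith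
  have hα0 : 0 < α := by linarith
  set e := (α - p + 1) / (p - 1) with he
  have he0 : 0 ≤ e := div_nonneg (by linarith) hp1.le
  have s1 : δ * (δ / ρ) ^ (α - p) = δ ^ (α - p + 1) * ρ ^ (p - α) := by
    rw [Real.div_rpow hδ.le hρ.le, Real.rpow_add_one hδ.ne', show p - α = -(α - p) by ring,
      Real.rpow_neg hρ.le]
    field_simp
  have s2 : δ ^ (α - p + 1) ≤ δ1 ^ (α - p + 1) := Real.rpow_le_rpow hδ.le hδδ (by linarith)
  have s3 : ρ ^ (p - α) ≤ ρ1 ^ (p - α) := Real.rpow_le_rpow hρ.le hρρ (by linarith)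
  have s4 : δ1 ^ (α - p + 1) ≤ h ^ e * ρ1 ^ (p * e) := by
    have : δ1 ^ (α - p + 1) = (δ1 ^ (p - 1)) ^ e := by
      rw [← Real.rpow_mul hδ1.le]; congr 1; rw [he]; field_simp
    rw [this, e1, Real.rpow_mul hρ1.le, ← Real.mul_rpow hh.le (by positivity)]
    apply Real.rpow_le_rpow (by positivity) _ he0
    apply div_le_self (by positivity); linarith
  have s5 : h ^ e = (h ^ ((α - p + 1) / α)) ^ (α / (p - 1)) := by
    rw [← Real.rpow_mul hh.le]; congr 1; rw [he]; field_simp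
  have s6 : ρ1 ^ (p * e) * ρ1 ^ (p - α) = ρ1 ^ (α / (p - 1)) := by
    rw [← Real.rpow_add hρ1]; congr 1; rw [he]; field_simp; ring
  have s7 : 1 ≤ α / (p - 1) := by rw [le_div_iff₀ hp1]; linarith
  calc β ^ (α / (p - 1)) * δ * (δ / ρ) ^ (α - p)
      = β ^ (α / (p - 1)) * (δ ^ (α - p + 1) * ρ ^ (p - α)) := by rw [← s1]; ring
    _ ≤ β ^ (α / (p - 1)) * ((h ^ e * ρ1 ^ (p * e)) * ρ1 ^ (p - α)) := by
        gcongr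
        exact s2.trans s4
    _ = (β * h ^ ((α - p + 1) / α) * ρ1) ^ (α / (p - 1)) := by
        rw [Real.mul_rpow (by positivity) hρ1.le, Real.mul_rpow hβ (by positivity), ← s5, ← s6]
        ring
    _ ≤ c1 ^ (α / (p - 1)) := by
        apply Real.rpow_le_rpow (by positivity) e2 (by positivity)
    _ ≤ c1 ^ (1:ℝ) := Real.rpow_le_rpow_of_exponent_ge hc1 hc1' s7
    _ = c1 := Real.rpow_one _

/-- increment, first case -/
lemma calc_case1 {p α β Q H R c1 K κ : ℝ} (hp : 1 < p) (hα₁ : p - 1 ≤ α)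
    (hβ : 0 ≤ β) (hQ : 0 < Q) (hR : 0 < R) (hκ : 0 < κ) (hκ1 : κ ≤ 1) (hH : κ ≤ H)
    (hK : 1 ≤ K) (hc1 : 0 < c1) {ρ1 : ℝ}
    (hρ1 : ρ1 = c1 * R / (1 + R * (Q * H) ^ ((α - p + 1) / α) * β)) :
    (c1 / (2 * K)) ^ (1 / (p - 1)) * κ ^ (1 / (p - 1) - 1 / α) * (ρ1 / R) *
      (R * (R * (Q / (1 + R * Q ^ ((α - p + 1) / α) * β))) ^ (1 / (p - 1))) ≤
      ((Q * H) * ρ1 ^ p / (2 * K)) ^ (1 / (p - 1)) * H ^ (-(1 / α)) := by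
  have hp1 : 0 < p - 1 := by linarith
  have hα0 : 0 < α := by linarith
  have hH0 : 0 < H := by linarith
  set γ := (α - p + 1) / α with hγ
  have hγ0 : 0 ≤ γ := div_nonneg (by linarith) hα0.le
  set i := 1 / (p - 1) with hi
  have hi0 : 0 < i := by positivity
  set Y := 1 + R * Q ^ γ * β with hY
  have hY0 : 0 < Y := by positivity
  set Z := 1 + R * (Q * H) ^ γ * β with hZ
  have hZ0 : 0 < Z := by positivity
  have hρ0 : 0 < ρ1 := by rw [hρ1]; positivity
  -- main comparison
  have hij : 0 ≤ i - 1 / α := by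
    have : 1 / α ≤ 1 / (p - 1) := one_div_le_one_div_of_le hp1 hα₁
    linarith
  have main : κ ^ (i - 1 / α) ≤ (H * Y / Z) ^ i * H ^ (-(1 / α)) := by
    rcases le_total H 1 with h1 | h1
    · have hZY : Z ≤ Y := by
        rw [hZ, hY, Real.mul_rpow hQ.le hH0.le]
        have : H ^ γ ≤ 1 := Real.rpow_le_one hH0.le h1 hγ0
        have h3 : 0 ≤ R * Q ^ γ * β := by positivity
        nlinarith
      have h4 : H ≤ H * Y / Z := by
        rw [le_div_iff₀ hZ0]; gcongr
      calc κ ^ (i - 1 / α) ≤ H ^ (i - 1 / α) := Real.rpow_le_rpow hκ.le hH hij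
        _ = H ^ i * H ^ (-(1 / α)) := by rw [← Real.rpow_add hH0]; congr 1
        _ ≤ _ := by gcongr
    · have hZY : Z ≤ H ^ γ * Y := by
        rw [hZ, hY, Real.mul_rpow hQ.le hH0.le]
        have : 1 ≤ H ^ γ := Real.one_le_rpow h1 hγ0
        linarith
      have h4 : H ^ (1 - γ) ≤ H * Y / Z := by
        rw [le_div_iff₀ hZ0]
        calc H ^ (1 - γ) * Z ≤ H ^ (1 - γ) * (H ^ γ * Y) := by gcongr
          _ = (H ^ (1 - γ) * H ^ γ) * Y := by ring
          _ = H * Y := by rw [← Real.rpow_add hH0]; simp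
      have h5 : (H ^ (1 - γ)) ^ i * H ^ (-(1 / α)) = 1 := by
        rw [← Real.rpow_mul hH0.le, ← Real.rpow_add hH0]
        have : (1 - γ) * i + -(1 / α) = 0 := by rw [hγ, hi]; field_simp; ring
        rw [this, Real.rpow_zero]
      calc κ ^ (i - 1 / α) ≤ 1 := Real.rpow_le_one hκ.le hκ1 hij
        _ = (H ^ (1 - γ)) ^ i * H ^ (-(1 / α)) := h5.symm
        _ ≤ _ := by gcongr
  have e1 : ((Q * H) * ρ1 ^ p / (2 * K)) ^ i = ρ1 * (c1 / (2 * K)) ^ i * (R * (Q / Y)) ^ i *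
      (H * Y / Z) ^ i := by
    have : (Q * H) * ρ1 ^ p / (2 * K) =
        ρ1 ^ (p - 1) * ((c1 / (2 * K)) * (R * (Q / Y)) * (H * Y / Z)) := by
      have h6 : ρ1 ^ p = ρ1 ^ (p - 1) * ρ1 := by
        rw [← Real.rpow_add_one hρ0.ne']; congr 1; ring
      rw [h6]
      have h7 : (Q * H) * (ρ1 ^ (p - 1) * ρ1) / (2 * K) = ρ1 ^ (p - 1) * (Q * H * ρ1 / (2 * K)) := by
        ring
      rw [h7]
      congr 1
      rw [hρ1]
      field_simp
    rw [this, Real.mul_rpow (by positivity) (by positivity), ← Real.rpow_mul hρ0.le,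
      show (p - 1) * i = 1 by rw [hi]; field_simp, Real.rpow_one,
      Real.mul_rpow (by positivity) (by positivity), Real.mul_rpow (by positivity) (by positivity)]
    ring
  rw [e1]
  have hX : 0 ≤ ρ1 * (c1 / (2 * K)) ^ i * (R * (Q / Y)) ^ i := by positivity
  calc (c1 / (2 * K)) ^ i * κ ^ (i - 1 / α) * (ρ1 / R) * (R * (R * (Q / Y)) ^ i)
      = (ρ1 * (c1 / (2 * K)) ^ i * (R * (Q / Y)) ^ i) * κ ^ (i - 1 / α) := by field_simp
    _ ≤ (ρ1 * (c1 / (2 * K)) ^ i * (R * (Q / Y)) ^ i) * ((H * Y / Z) ^ i * H ^ (-(1 / α))) := by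
        gcongr
    _ = _ := by ring

/-- increment, second case -/
lemma calc_case2 {p β Q H R K M τ Y : ℝ} (hp : 1 < p) (hQ : 0 < Q) (hR : 0 < R) (hH : 0 < H)
    (hK : 1 ≤ K) (hM : 0 < M) (hτ : 0 < τ) (hY : 1 ≤ Y) {ρ : ℝ} (hρ0 : 0 < ρ)
    (hρ : ρ ^ p = 2 * K * (τ * M) ^ (p - 1) / (Q * H)) :
    (τ / (4 * K)) ^ (1 / p) * (ρ / R) *
      min (R * (R * (Q / Y)) ^ (1 / (p - 1))) 1 ≤ τ * M * (H * (2 * M)) ^ (-(1 / p)) := by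
  have hp1 : 0 < p - 1 := by linarith
  have hp0 : 0 < p := by linarith
  have hmin : min (R * (R * (Q / Y)) ^ (1 / (p - 1))) 1 ≤ R * Q ^ (1 / p) := by
    rcases le_total 1 (R * Q ^ (1 / p)) with h | h
    · exact (min_le_right _ _).trans h
    · refine (min_le_left _ _).trans ?_
      have h1 : R * (Q / Y) ≤ R * Q := by gcongr; exact div_le_self hQ.le hY
      calc R * (R * (Q / Y)) ^ (1 / (p - 1)) ≤ R * (R * Q) ^ (1 / (p - 1)) := by gcongr
        _ = (R * Q ^ (1 / p)) ^ (p / (p - 1)) := by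
            rw [Real.mul_rpow hR.le hQ.le, Real.mul_rpow hR.le (by positivity),
              ← Real.rpow_mul hQ.le, ← mul_assoc]
            nth_rewrite 1 [← Real.rpow_one R]
            rw [← Real.rpow_add hR]
            congr 2
            · field_simp; ring
            · field_simp
        _ ≤ (R * Q ^ (1 / p)) ^ (1:ℝ) := by
            apply Real.rpow_le_rpow_of_exponent_ge (by positivity) h
            rw [le_div_iff₀ hp1]; linarith
        _ = _ := Real.rpow_one _
  have e1 : τ * M * (H * (2 * M)) ^ (-(1 / p)) = (τ / (4 * K)) ^ (1 / p) * ρ * Q ^ (1 / p) := by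
    have hr : ρ = (2 * K * (τ * M) ^ (p - 1) / (Q * H)) ^ (1 / p) := by
      rw [← hρ, ← Real.rpow_mul hρ0.le, mul_one_div_cancel hp0.ne', Real.rpow_one]
    rw [hr, ← Real.mul_rpow (by positivity) (by positivity),
      ← Real.mul_rpow (by positivity) (by positivity), Real.rpow_neg (by positivity),
      ← Real.inv_rpow (by positivity)]
    have h2 : τ * M = ((τ * M) ^ p) ^ (1 / p) := by
      rw [← Real.rpow_mul (by positivity), mul_one_div_cancel hp0.ne', Real.rpow_one]
    have h3 : (τ * M) ^ p = (τ * M) ^ (p - 1) * (τ * M) := by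
      rw [← Real.rpow_add_one (by positivity)]; congr 1; ring
    rw [h3] at h2
    nth_rewrite 1 [h2]
    rw [← Real.mul_rpow (by positivity) (by positivity)]
    congr 1
    field_simp
    ring
  rw [e1]
  calc (τ / (4 * K)) ^ (1 / p) * (ρ / R) * min (R * (R * (Q / Y)) ^ (1 / (p - 1))) 1
      ≤ (τ / (4 * K)) ^ (1 / p) * (ρ / R) * (R * Q ^ (1 / p)) := by gcongr
    _ = _ := by field_simp

lemma step_calc {p α C₁ K τ κ ω : ℝ} (hp : 1 < p) (hα₁ : p - 1 ≤ α) (hα₂ : α ≤ p) (hC₁ : 0 < C₁)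
    (hK : 1 ≤ K) (hτ : 0 < τ) (hκ : 0 < κ) (hκ1 : κ ≤ 1) (hω : 0 < ω) :
    ∃ c : ℝ, 0 < c ∧ ∀ R Q β M H : ℝ, 0 < R → 0 < Q → 0 ≤ β → 0 < M → κ ≤ H →
      ∃ ρ δ : ℝ, 0 < ρ ∧ ρ ≤ ω * R ∧ 0 < δ ∧ δ ≤ τ * M ∧
        β ^ (α / (p - 1)) * δ * (δ / ρ) ^ (α - p) ≤ C₁ / 4 ∧
        K * δ ^ (p - 1) < Q * H * ρ ^ p ∧
        c * (ρ / R) * min (R * (R * (Q / (1 + R * Q ^ ((α - p + 1) / α) * β))) ^ (1 / (p - 1))) 1 ≤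
          δ * ((H * (2 * M)) ^ (-(1 / p)) + H ^ (-(1 / α))) := by
  have hp1 : 0 < p - 1 := by linarith
  have hp0 : 0 < p := by linarith
  set c1 := min (min ω (C₁ / 4)) 1 with hc1
  have hc10 : 0 < c1 := by
    rw [hc1]; refine lt_min (lt_min hω (by positivity)) one_pos
  have hc1ω : c1 ≤ ω := (min_le_left _ _).trans (min_le_left _ _)
  have hc1C : c1 ≤ C₁ / 4 := (min_le_left _ _).trans (min_le_right _ _)
  have hc11 : c1 ≤ 1 := min_le_right _ _
  set ca := (c1 / (2 * K)) ^ (1 / (p - 1)) * κ ^ (1 / (p - 1) - 1 / α) with hca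
  set cb := (τ / (4 * K)) ^ (1 / p) with hcb
  have hca0 : 0 < ca := by positivity
  have hcb0 : 0 < cb := by positivity
  refine ⟨min ca cb, lt_min hca0 hcb0, ?_⟩
  intro R Q β M H hR hQ hβ hM hH
  have hH0 : 0 < H := by linarith
  have hh : 0 < Q * H := by positivity
  set T := R * (R * (Q / (1 + R * Q ^ ((α - p + 1) / α) * β))) ^ (1 / (p - 1)) with hT
  have hT0 : 0 ≤ min T 1 := le_min (by positivity) zero_le_one
  obtain ⟨ρ1, hρ1⟩ : ∃ ρ1, ρ1 = c1 * R / (1 + R * (Q * H) ^ ((α - p + 1) / α) * β) := ⟨_, rfl⟩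
  have hZ : 1 ≤ 1 + R * (Q * H) ^ ((α - p + 1) / α) * β := by
    have : 0 ≤ R * (Q * H) ^ ((α - p + 1) / α) * β := by positivity
    linarith
  have hρ10 : 0 < ρ1 := by rw [hρ1]; positivity
  have hρ1ω : ρ1 ≤ ω * R := by
    rw [hρ1]
    exact (div_le_self (by positivity) hZ).trans (by gcongr)
  have e2 : β * (Q * H) ^ ((α - p + 1) / α) * ρ1 ≤ c1 := by
    rw [hρ1, ← mul_div_assoc, div_le_iff₀ (by linarith)]
    nlinarith
  obtain ⟨δ1, hδ1⟩ : ∃ δ1, δ1 = ((Q * H) * ρ1 ^ p / (2 * K)) ^ (1 / (p - 1)) := ⟨_, rfl⟩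
  have hδ10 : 0 < δ1 := by rw [hδ1]; positivity
  have e1 : δ1 ^ (p - 1) = Q * H * ρ1 ^ p / (2 * K) := by
    rw [hδ1, ← Real.rpow_mul (by positivity), one_div_mul_cancel hp1.ne', Real.rpow_one]
  have hterm1 : 0 ≤ (H * (2 * M)) ^ (-(1 / p)) := by positivity
  have hterm2 : 0 ≤ H ^ (-(1 / α)) := by positivity
  by_cases hcase : δ1 ≤ τ * M
  · refine ⟨ρ1, δ1, hρ10, hρ1ω, hδ10, hcase, ?_, ?_, ?_⟩
    · exact (calc_B hp hα₁ hα₂ hβ hh hρ10 hδ10 hδ10 hρ10 le_rfl le_rfl hK hc10 hc11 e1 e2).trans hc1C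
    · rw [e1]
      have : 0 < Q * H * ρ1 ^ p := by positivity
      rw [← mul_div_assoc, div_lt_iff₀ (by positivity)]
      nlinarith [mul_pos this (show 0 < K by linarith)]
    · have h1 := calc_case1 hp hα₁ hβ hQ hR hκ hκ1 hH hK hc10 hρ1
      rw [← hδ1, ← hT, ← hca] at h1
      calc min ca cb * (ρ1 / R) * min T 1 ≤ ca * (ρ1 / R) * T := by
            gcongr
            · exact min_le_left _ _
            · exact min_le_left _ _
        _ ≤ δ1 * H ^ (-(1 / α)) := h1
        _ ≤ _ := by gcongr; linarith
  · push Not at hcase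
    have hτM : 0 < τ * M := by positivity
    obtain ⟨ρ, hρd⟩ : ∃ ρ, ρ = (2 * K * (τ * M) ^ (p - 1) / (Q * H)) ^ (1 / p) := ⟨_, rfl⟩
    have hρ0 : 0 < ρ := by rw [hρd]; positivity
    have hρ : ρ ^ p = 2 * K * (τ * M) ^ (p - 1) / (Q * H) := by
      rw [hρd, ← Real.rpow_mul (by positivity), one_div_mul_cancel hp0.ne', Real.rpow_one]
    have hρρ : ρ ≤ ρ1 := by
      rw [← Real.rpow_le_rpow_iff hρ0.le hρ10.le hp0, hρ, div_le_iff₀ hh]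
      have h3 : (τ * M) ^ (p - 1) ≤ δ1 ^ (p - 1) := Real.rpow_le_rpow hτM.le hcase.le hp1.le
      rw [e1, le_div_iff₀ (by positivity)] at h3
      linarith
    refine ⟨ρ, τ * M, hρ0, hρρ.trans hρ1ω, hτM, le_rfl, ?_, ?_, ?_⟩
    · exact (calc_B hp hα₁ hα₂ hβ hh hρ10 hδ10 hτM hρ0 hcase.le hρρ hK hc10 hc11 e1 e2).trans hc1C
    · rw [hρ, mul_div_cancel₀ _ hh.ne']
      have : 0 < (τ * M) ^ (p - 1) := by positivity
      nlinarith [mul_pos this (show 0 < K by linarith)]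
    · have hY : 1 ≤ 1 + R * Q ^ ((α - p + 1) / α) * β := by
        have : 0 ≤ R * Q ^ ((α - p + 1) / α) * β := by positivity
        linarith
      have h1 := calc_case2 (β := β) hp hQ hR hH0 hK hM hτ hY hρ0 hρ
      rw [← hT, ← hcb] at h1
      calc min ca cb * (ρ / R) * min T 1 ≤ cb * (ρ / R) * min T 1 := by
            gcongr
            exact min_le_right _ _
        _ ≤ _ := h1
        _ ≤ _ := by gcongr; linarith

lemma Gone {w : ℝ → ℝ} {m0 : ℝ} (hfin : (∫⁻ t in Ioi m0, ENNReal.ofReal (w t)) < ⊤) :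
    ∃ (G : ℝ → ℝ) (I : ℝ), (∀ s t, s ≤ t → G s ≤ G t) ∧ (∀ t, 0 ≤ G t) ∧ (∀ t, G t ≤ I) ∧
      ∀ M δ c, m0 ≤ M → 0 < δ → 0 ≤ c → (∀ s ∈ Ioc M (M + δ), c ≤ w s) →
        G M + δ * c ≤ G (M + δ) := by
  have hlt : ∀ t, (∫⁻ s in Ioc m0 t, ENNReal.ofReal (w s)) ≤
      ∫⁻ t in Ioi m0, ENNReal.ofReal (w t) := fun t => lintegral_mono_set Ioc_subset_Ioi_self
  have hne : ∀ t, (∫⁻ s in Ioc m0 t, ENNReal.ofReal (w s)) ≠ ⊤ :=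
    fun t => ((hlt t).trans_lt hfin).ne
  refine ⟨fun t => (∫⁻ s in Ioc m0 t, ENNReal.ofReal (w s)).toReal,
    (∫⁻ t in Ioi m0, ENNReal.ofReal (w t)).toReal, ?_, ?_, ?_, ?_⟩
  · intro s t hst
    exact ENNReal.toReal_mono (hne t) (lintegral_mono_set (Ioc_subset_Ioc_right hst))
  · intro t; exact ENNReal.toReal_nonneg
  · intro t; exact ENNReal.toReal_mono hfin.ne (hlt t)
  · intro M δ c hM hδ hc hw
    have h1 : (∫⁻ s in Ioc m0 (M + δ), ENNReal.ofReal (w s)) =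
        (∫⁻ s in Ioc m0 M, ENNReal.ofReal (w s)) + ∫⁻ s in Ioc M (M + δ), ENNReal.ofReal (w s) := by
      rw [← Ioc_union_Ioc_eq_Ioc hM (show M ≤ M + δ by linarith)]
      exact lintegral_union measurableSet_Ioc (Ioc_disjoint_Ioc_of_le le_rfl)
    have h2 : ENNReal.ofReal (δ * c) ≤ ∫⁻ s in Ioc M (M + δ), ENNReal.ofReal (w s) := by
      calc ENNReal.ofReal (δ * c) = ∫⁻ s in Ioc M (M + δ), ENNReal.ofReal c := by
            rw [setLIntegral_const, Real.volume_Ioc, ← ENNReal.ofReal_mul hc]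
            congr 1; ring
        _ ≤ _ := setLIntegral_mono' measurableSet_Ioc
            (fun s hs => ENNReal.ofReal_le_ofReal (hw s hs))
    have h3 : (∫⁻ s in Ioc M (M + δ), ENNReal.ofReal (w s)) ≠ ⊤ := by
      intro htop
      apply hne (M + δ)
      rw [h1, htop]; simp
    simp only []
    rw [h1, ENNReal.toReal_add (hne M) h3]
    have := ENNReal.toReal_mono h3 h2
    rw [ENNReal.toReal_ofReal (by positivity)] at this
    linarith

lemma ginf_facts {g : ℝ → ℝ} (hg : ContinuousOn g (Set.Ici 0))
    (hgpos : ∀ t : ℝ, 0 < t → 0 < g t) {θ : ℝ} (hθ : 1 < θ) :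
    (∀ m1 m2 : ℝ, 0 < m1 → m1 ≤ m2 → ∃ κ, 0 < κ ∧ ∀ t ∈ Icc m1 m2, κ ≤ ginf g θ t) ∧
    ∀ t s, 0 < t → s ∈ Ioo (t / θ) (θ * t) → ginf g θ t ≤ g s := by
  have hθ0 : 0 < θ := by linarith
  constructor
  · intro m1 m2 h1 h12
    have hsub : Icc (m1 / θ) (θ * m2) ⊆ Ici 0 := fun s hs => (by positivity : 0 ≤ m1 / θ).trans hs.1
    have hm : m1 / θ ≤ m1 := div_le_self h1.le hθ.le
    have hm2 : m2 ≤ θ * m2 := by nlinarith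
    obtain ⟨s0, hs0, hmin⟩ := isCompact_Icc.exists_isMinOn
      (s := Icc (m1 / θ) (θ * m2)) ⟨m1, hm, h12.trans hm2⟩ (hg.mono hsub)
    refine ⟨g s0, hgpos _ (lt_of_lt_of_le (by positivity) hs0.1), ?_⟩
    intro t ht
    have ht0 : 0 < t := lt_of_lt_of_le h1 ht.1
    unfold ginf
    refine le_csInf ⟨g t, mem_image_of_mem _ ⟨div_lt_self ht0 hθ, by nlinarith⟩⟩ ?_
    rintro _ ⟨s, hs, rfl⟩
    refine hmin ⟨?_, ?_⟩
    · have : m1 / θ ≤ t / θ := by gcongr; exact ht.1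
      linarith [hs.1]
    · have : θ * t ≤ θ * m2 := by gcongr; exact ht.2
      linarith [hs.2]
  · intro t s ht hs
    refine csInf_le ⟨0, ?_⟩ (mem_image_of_mem _ hs)
    rintro _ ⟨s, hs, rfl⟩
    exact (hgpos s (lt_trans (by positivity) hs.1)).le

lemma fin_ext {w : ℝ → ℝ} (h1 : (∫⁻ t in Ioi (1:ℝ), ENNReal.ofReal (w t)) < ⊤) {m0 C : ℝ}
    (hC : ∀ t ∈ Ioc m0 1, w t ≤ C) : (∫⁻ t in Ioi m0, ENNReal.ofReal (w t)) < ⊤ := by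
  have hsub : Ioi m0 ⊆ Ioc m0 1 ∪ Ioi 1 := by
    intro t ht
    rcases le_or_gt t 1 with h | h
    · exact Or.inl ⟨ht, h⟩
    · exact Or.inr h
  refine (lintegral_mono_set hsub).trans_lt ((lintegral_union_le _ _ _).trans_lt ?_)
  refine ENNReal.add_lt_top.2 ⟨?_, h1⟩
  calc (∫⁻ t in Ioc m0 1, ENNReal.ofReal (w t)) ≤ ∫⁻ t in Ioc m0 1, ENNReal.ofReal C :=
        setLIntegral_mono' measurableSet_Ioc (fun s hs => ENNReal.ofReal_le_ofReal (hC s hs))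
    _ < ⊤ := by
        rw [setLIntegral_const, Real.volume_Ioc]
        exact ENNReal.mul_lt_top ENNReal.ofReal_lt_top ENNReal.ofReal_lt_top

lemma Gexists {g : ℝ → ℝ} (hg : ContinuousOn g (Set.Ici 0))
    (hgpos : ∀ t : ℝ, 0 < t → 0 < g t) {θ p α : ℝ} (hθ : 1 < θ) (hp : 1 < p) (hα : 0 < α)
    (h1 : (∫⁻ t in Set.Ioi (1 : ℝ), ENNReal.ofReal ((ginf g θ t * t) ^ (-(1 / p)))) < ⊤)
    (h2 : (∫⁻ t in Set.Ioi (1 : ℝ), ENNReal.ofReal (ginf g θ t ^ (-(1 / α)))) < ⊤)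
    {m0 : ℝ} (hm0 : 0 < m0) :
    ∃ (τ κ I : ℝ) (G : ℝ → ℝ), 0 < τ ∧ τ < 1 ∧ 0 < κ ∧ κ ≤ 1 ∧ (∀ s t, s ≤ t → G s ≤ G t) ∧
      (∀ t, 0 ≤ G t) ∧ (∀ t, G t ≤ I) ∧
      ∀ M, m0 ≤ M → ∃ H, κ ≤ H ∧ (∀ s ∈ Icc ((1 - τ) * M) ((1 + τ) * M), H ≤ g s) ∧
        ∀ δ, 0 < δ → δ ≤ τ * M →
          G M + δ * ((H * (2 * M)) ^ (-(1 / p)) + H ^ (-(1 / α))) ≤ G (M + δ) := by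
  have hp0 : 0 < p := by linarith
  have hθ0 : 0 < θ := by linarith
  obtain ⟨hA, hBd⟩ := ginf_facts hg hgpos hθ
  obtain ⟨κ1, hκ1, hκ1'⟩ := hA m0 (max m0 1) hm0 (le_max_left _ _)
  obtain ⟨G1, I1, hG1m, hG10, hG1I, hG1⟩ := Gone (fin_ext h1 (m0 := m0)
    (C := (κ1 * m0) ^ (-(1 / p))) (by
      intro t ht
      have h3 := hκ1' t ⟨ht.1.le, ht.2.trans (le_max_right _ _)⟩
      have h4 : κ1 * m0 ≤ ginf g θ t * t := mul_le_mul h3 ht.1.le hm0.le (hκ1.le.trans h3)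
      refine Real.rpow_le_rpow_of_nonpos (by positivity) h4 ?_
      have : 0 < 1 / p := by positivity
      linarith))
  obtain ⟨G2, I2, hG2m, hG20, hG2I, hG2⟩ := Gone (fin_ext h2 (m0 := m0)
    (C := κ1 ^ (-(1 / α))) (by
      intro t ht
      have h3 := hκ1' t ⟨ht.1.le, ht.2.trans (le_max_right _ _)⟩
      refine Real.rpow_le_rpow_of_nonpos (by positivity) h3 ?_
      have : 0 < 1 / α := by positivity
      linarith))
  set τ := (θ - 1) / (2 * (θ + 1)) with hτ
  have hτ0 : 0 < τ := div_pos (by linarith) (by linarith)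
  have hτe : τ * (2 * (θ + 1)) = θ - 1 := by rw [hτ]; field_simp
  have hτ1 : τ < 1 := by rw [hτ, div_lt_one (by linarith)]; linarith
  have hτθ : 1 + τ < θ * (1 - τ) := by nlinarith
  have hτθ2 : 1 + τ < θ := by nlinarith
  set I := I1 + I2 with hI
  have hI0 : 0 ≤ I := by linarith [hG10 0, hG20 0, hG1I 0, hG2I 0]
  set κ := min 1 ((τ * m0 / (I + 1)) ^ α) with hκ
  have hκ0 : 0 < κ := lt_min one_pos (by positivity)
  refine ⟨τ, κ, I, fun t => G1 t + G2 t, hτ0, hτ1, hκ0, min_le_left _ _, ?_, ?_, ?_, ?_⟩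
  · intro s t hst; exact add_le_add (hG1m s t hst) (hG2m s t hst)
  · intro t; exact add_nonneg (hG10 t) (hG20 t)
  · intro t; exact add_le_add (hG1I t) (hG2I t)
  · intro M hM
    have hM0 : 0 < M := lt_of_lt_of_le hm0 hM
    have hlow : 0 < (1 - τ) * M := mul_pos (by linarith) hM0
    obtain ⟨s0, hs0, hmin⟩ := isCompact_Icc.exists_isMinOn
      (s := Icc ((1 - τ) * M) ((1 + τ) * M)) ⟨M, by nlinarith, by nlinarith⟩
      (hg.mono (fun s hs => hlow.le.trans hs.1))
    have hs00 : 0 < s0 := lt_of_lt_of_le hlow hs0.1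
    set H := g s0 with hH
    have hH0 : 0 < H := hgpos _ hs00
    have hinf : ∀ t ∈ Icc M ((1 + τ) * M), 0 < ginf g θ t ∧ ginf g θ t ≤ H := by
      intro t ht
      have ht0 : 0 < t := lt_of_lt_of_le hM0 ht.1
      constructor
      · obtain ⟨κ', h5, h6⟩ := hA t t ht0 le_rfl
        exact lt_of_lt_of_le h5 (h6 t ⟨le_rfl, le_rfl⟩)
      · refine hBd t s0 ht0 ⟨?_, ?_⟩
        · rw [div_lt_iff₀ hθ0]
          have h7 : (1 - τ) * M * θ ≤ s0 * θ := by gcongr; exact hs0.1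
          nlinarith [ht.2]
        · have h7 : θ * M ≤ θ * t := by gcongr; exact ht.1
          nlinarith [hs0.2]
    have hstep : ∀ δ, 0 < δ → δ ≤ τ * M →
          G1 M + G2 M + δ * ((H * (2 * M)) ^ (-(1 / p)) + H ^ (-(1 / α)))
            ≤ G1 (M + δ) + G2 (M + δ) := by
      intro δ hδ hδτ
      have hr : ∀ s ∈ Ioc M (M + δ), s ∈ Icc M ((1 + τ) * M) :=
        fun s hs => ⟨hs.1.le, by linarith [hs.2]⟩
      have a1 := hG1 M δ ((H * (2 * M)) ^ (-(1 / p))) hM hδ (by positivity) (by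
        intro s hs
        obtain ⟨b1, b2⟩ := hinf s (hr s hs)
        have hs1 : 0 < s := lt_trans hM0 hs.1
        refine Real.rpow_le_rpow_of_nonpos (by positivity) ?_ (by
          have : 0 < 1 / p := by positivity
          linarith)
        have : s ≤ 2 * M := by nlinarith [(hr s hs).2]
        gcongr)
      have a2 := hG2 M δ (H ^ (-(1 / α))) hM hδ (by positivity) (by
        intro s hs
        obtain ⟨b1, b2⟩ := hinf s (hr s hs)
        exact Real.rpow_le_rpow_of_nonpos b1 b2 (by
          have : 0 < 1 / α := by positivity
          linarith))
      linarith
    refine ⟨H, ?_, fun s hs => hmin hs, hstep⟩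
    refine (min_le_right _ _).trans ?_
    have h8 := hstep (τ * M) (by positivity) le_rfl
    have h9 : τ * M * H ^ (-(1 / α)) ≤ I := by
      have : 0 ≤ τ * M * (H * (2 * M)) ^ (-(1 / p)) := by positivity
      have := hG1I (M + τ * M)
      have := hG2I (M + τ * M)
      have := hG10 M
      have := hG20 M
      linarith
    have h10 : τ * m0 / (I + 1) ≤ H ^ (1 / α) := by
      rw [Real.rpow_neg hH0.le, ← div_eq_mul_inv, div_le_iff₀ (by positivity)] at h9
      rw [div_le_iff₀ (by linarith)]
      have h11 : 0 < H ^ (1 / α) := by positivity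
      have : τ * m0 ≤ τ * M := by gcongr
      linarith
    calc (τ * m0 / (I + 1)) ^ α ≤ (H ^ (1 / α)) ^ α :=
          Real.rpow_le_rpow (by positivity) h10 hα.le
      _ = H := by rw [← Real.rpow_mul hH0.le, one_div_mul_cancel hα.ne', Real.rpow_one]

lemma ess_facts {n : ℕ} (hn : 2 ≤ n) {σ r : ℝ} (hσ : 1 < σ) (hr : 0 < r) {f : Euc n → ℝ}
    (h0 : ∀ x, 0 ≤ f x) (hl : LocBdd f) :
    0 ≤ essInf f (volume.restrict (Ann n (r / σ) (σ * r))) ∧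
    (∀ᵐ x, x ∈ Ann n (r / σ) (σ * r) →
      essInf f (volume.restrict (Ann n (r / σ) (σ * r))) ≤ f x) ∧
    0 ≤ essSup f (volume.restrict (Ann n (r / σ) (σ * r))) ∧
    (∀ᵐ x, x ∈ Ann n (r / σ) (σ * r) →
      f x ≤ essSup f (volume.restrict (Ann n (r / σ) (σ * r)))) ∧
    (∀ C, (∀ x ∈ closedBall (0 : Euc n) (σ * r), f x ≤ C) →
      essInf f (volume.restrict (Ann n (r / σ) (σ * r))) ≤ C) := by
  set s := Ann n (r / σ) (σ * r) with hs
  have hop : IsOpen s := by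
    apply IsOpen.inter (s := {x : Euc n | r / σ < ‖x‖}) (t := {x : Euc n | ‖x‖ < σ * r})
    · exact isOpen_lt continuous_const continuous_norm
    · exact isOpen_lt continuous_norm continuous_const
  have hsm : MeasurableSet s := hop.measurableSet
  haveI : Nontrivial (Euc n) := by
    haveI : Nonempty (Fin n) := ⟨⟨0, by omega⟩⟩
    infer_instance
  have hne : s.Nonempty := by
    obtain ⟨z, hz⟩ := NormedSpace.sphere_nonempty (x := (0 : Euc n)) (r := r) |>.2 hr.le
    refine ⟨z, ?_, ?_⟩
    · rw [mem_sphere_zero_iff_norm.1 hz]; rw [div_lt_iff₀ (by linarith)]; nlinarith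
    · rw [mem_sphere_zero_iff_norm.1 hz]; nlinarith
  have hμ : volume.restrict s ≠ 0 := by
    rw [Ne, Measure.restrict_eq_zero]
    exact (hop.measure_pos volume hne).ne'
  haveI : NeBot (ae (volume.restrict s)) := ae_neBot.2 hμ
  obtain ⟨C, hC⟩ := hl _ (isCompact_closedBall (0 : Euc n) (σ * r))
  have hsub : ∀ x ∈ s, x ∈ closedBall (0 : Euc n) (σ * r) := by
    intro x hx; rw [mem_closedBall_zero_iff]; exact hx.2.le
  have hub : ∀ C, (∀ x ∈ closedBall (0 : Euc n) (σ * r), f x ≤ C) →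
      ∀ᵐ x ∂(volume.restrict s), f x ≤ C := by
    intro C hC
    filter_upwards [ae_restrict_mem hsm] with x hx using hC x (hsub x hx)
  have hbu : IsBoundedUnder (· ≤ ·) (ae (volume.restrict s)) f := ⟨C, by
    simpa [eventually_map] using hub C hC⟩
  have hbl : IsBoundedUnder (· ≥ ·) (ae (volume.restrict s)) f := ⟨0, by
    rw [eventually_map]; exact Eventually.of_forall h0⟩
  have hI := ae_essInf_le (f := f) (μ := volume.restrict s) hbl
  have hS := ae_le_essSup (f := f) (μ := volume.restrict s) hbu
  refine ⟨?_, (ae_restrict_iff' hsm).1 hI, ?_, (ae_restrict_iff' hsm).1 hS, ?_⟩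
  · exact le_liminf_of_le hbu.isCoboundedUnder_ge (Eventually.of_forall h0)
  · obtain ⟨x, hx⟩ := hS.exists
    exact (h0 x).trans hx
  · intro C hC
    obtain ⟨x, hx, hx'⟩ := (hI.and (hub C hC)).exists
    exact hx.trans hx'

lemma supArg {Φ : ℝ → ℝ} {R l c : ℝ} (hl : 0 < l)
    (hm : ∀ s t, R ≤ s → s ≤ t → Φ s ≤ Φ t)
    (hstep : ∀ r, R ≤ r → r ≤ R + l → ∃ ρ, 0 < ρ ∧ ρ ≤ l ∧ Φ r + c * ρ ≤ Φ (r + ρ))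
    (hc : 0 ≤ c) : Φ R + c * l ≤ Φ (R + 2 * l) := by
  set S := {r | R ≤ r ∧ r ≤ R + 2 * l ∧ Φ R + c * (r - R) ≤ Φ r} with hS
  have hR : R ∈ S := ⟨le_rfl, by linarith, by simp⟩
  have hbdd : BddAbove S := ⟨R + 2 * l, fun r hr => hr.2.1⟩
  set s := sSup S with hs
  have hRs : R ≤ s := le_csSup hbdd hR
  have hsl : s ≤ R + 2 * l := csSup_le ⟨R, hR⟩ fun r hr => hr.2.1
  have hsS : s ∈ S := by
    refine ⟨hRs, hsl, ?_⟩
    apply le_of_forall_pos_le_add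
    intro ε hε
    obtain ⟨r, hr, hr'⟩ := exists_lt_of_lt_csSup ⟨R, hR⟩
      (show s - ε / (c + 1) < s by have : 0 < ε / (c + 1) := by positivity
                                   linarith)
    have h1 := hm r s hr.1 (le_csSup hbdd hr)
    have h2 := hr.2.2
    have h3 : c * (ε / (c + 1)) ≤ ε := by
      rw [mul_div_assoc', div_le_iff₀ (by linarith)]; nlinarith
    have h4 : c * (s - r) ≤ c * (ε / (c + 1)) := mul_le_mul_of_nonneg_left (by linarith) hc
    nlinarith
  have hlt : R + l < s := by
    by_contra h
    push Not at h
    obtain ⟨ρ, hρ, hρl, h5⟩ := hstep s hRs h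
    have : s + ρ ∈ S := ⟨by linarith, by linarith, by have := hsS.2.2; nlinarith⟩
    have := le_csSup hbdd this
    linarith
  have h6 := hsS.2.2
  have h7 := hm s _ hRs hsl
  nlinarith

lemma step_one {n : ℕ} {p C₁ α : ℝ} {b q : Euc n → ℝ} {g : ℝ → ℝ}
    {u : Euc n → ℝ} {K : ℝ} (hq0 : ∀ x, 0 ≤ q x)
    (hK : ∀ (z : Euc n) (δ ρ k B h : ℝ), 0 < δ → 0 < ρ → u z = k + δ →
      (∀ x ∈ ball z ρ, u x ≤ k + 2 * δ) → 0 ≤ B →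
      (∀ᵐ x, x ∈ ball z ρ → b x ≤ B) → 0 ≤ h →
      (∀ᵐ x, x ∈ ball z ρ → k < u x → h ≤ q x * g (u x)) →
      B * δ * (δ / ρ) ^ (α - p) ≤ C₁ / 4 → h * ρ ^ p ≤ K * δ ^ (p - 1))
    {z : Euc n} {M δ ρ τ B Q H : ℝ} (hz : u z = M) (hδ : 0 < δ) (hρ : 0 < ρ)
    (hδM : δ ≤ τ * M) (hB : 0 ≤ B) (hQ : 0 ≤ Q) (hH : 0 ≤ H)
    (hbB : ∀ᵐ x, x ∈ ball z ρ → b x ≤ B) (hqQ : ∀ᵐ x, x ∈ ball z ρ → Q ≤ q x)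
    (hgH : ∀ s ∈ Icc ((1 - τ) * M) ((1 + τ) * M), H ≤ g s)
    (h1 : B * δ * (δ / ρ) ^ (α - p) ≤ C₁ / 4) (h2 : K * δ ^ (p - 1) < Q * H * ρ ^ p) :
    ∃ y ∈ ball z ρ, M + δ < u y := by
  by_contra hcon
  push Not at hcon
  have := hK z δ ρ (M - δ) B (Q * H) hδ hρ (by linarith)
    (fun x hx => by have := hcon x hx; linarith) hB hbB (mul_nonneg hQ hH) ?_ h1
  · linarith
  · filter_upwards [hqQ] with x hx hxb hxk
    apply mul_le_mul (hx hxb) _ hH (hq0 x)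
    apply hgH
    have := hcon x hxb
    constructor <;> nlinarith

lemma exists_M {n : ℕ} {p C₁ C₂ α : ℝ} {F : Euc n → Euc n} {b a u : Euc n → ℝ}
    (hn : 2 ≤ n) (D : Data n p C₁ C₂ α F b a u) :
    ∃ M : ℝ → ℝ, ∀ r, 0 < r → (∀ x, ‖x‖ ≤ r → u x ≤ M r) ∧ ∃ z, ‖z‖ = r ∧ u z = M r := by
  have hnt : Nontrivial (Euc n) := by
    have : Nonempty (Fin n) := ⟨⟨0, by omega⟩⟩
    infer_instance
  have key : ∀ r : ℝ, ∃ m : ℝ, 0 < r →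
      (∀ x, ‖x‖ ≤ r → u x ≤ m) ∧ ∃ z, ‖z‖ = r ∧ u z = m := by
    intro r
    by_cases hr : 0 < r
    · have hne := NormedSpace.sphere_nonempty (x := (0 : Euc n)) (r := r) |>.2 hr.le
      obtain ⟨z, hz, hmax⟩ := (isCompact_sphere (0 : Euc n) r).exists_isMaxOn hne
        D.hu.continuous.continuousOn
      refine ⟨u z, fun _ => ⟨?_, z, mem_sphere_zero_iff_norm.1 hz, rfl⟩⟩
      intro x hx
      obtain ⟨y, hy, hxy⟩ := maxP D hr hx
      exact hxy.trans (hmax (mem_sphere_zero_iff_norm.2 hy))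
    · exact ⟨0, fun h => absurd h hr⟩
  choose M hM using key
  exact ⟨M, hM⟩

lemma LocBdd.rpow {n : ℕ} {b : Euc n → ℝ} (hb : LocBdd b) (hb0 : ∀ x, 0 ≤ b x) {e : ℝ}
    (he : 0 ≤ e) : LocBdd (fun x => b x ^ e) := by
  intro K hK
  obtain ⟨C, hC⟩ := hb K hK
  exact ⟨C ^ e, fun x hx => Real.rpow_le_rpow (hb0 x) (hC x hx) he⟩

lemma shell_main (n : ℕ) (hn : 2 ≤ n) (p C₁ C₂ α : ℝ) (hp : 1 < p)
    (hC₁ : 0 < C₁) (hC₂ : 0 < C₂) (hα₁ : p - 1 ≤ α) (hα₂ : α ≤ p)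
    (A : Euc n → Euc n → Euc n) (hA : StructCond A p C₁ C₂)
    (b : Euc n → ℝ) (hbm : Measurable b) (hb0 : ∀ x, 0 ≤ b x) (hbloc : LocBdd b)
    (q : Euc n → ℝ) (hqm : Measurable q) (hq0 : ∀ x, 0 ≤ q x) (hqloc : LocBdd q)
    (g : ℝ → ℝ) (hg : ContinuousOn g (Set.Ici 0)) (hg0 : ∀ t ∈ Set.Ici (0 : ℝ), 0 ≤ g t)
    (hgpos : ∀ t : ℝ, 0 < t → 0 < g t)
    (θ σ : ℝ) (hθ : 1 < θ) (hσ : 1 < σ)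
    (h1 : (∫⁻ t in Set.Ioi (1 : ℝ), ENNReal.ofReal ((ginf g θ t * t) ^ (-(1 / p)))) < ⊤)
    (h2 : (∫⁻ t in Set.Ioi (1 : ℝ), ENNReal.ofReal (ginf g θ t ^ (-(1 / α)))) < ⊤)
    (u : Euc n → ℝ) (hu : ContDiff ℝ 1 u) (hu0 : ∀ x, 0 ≤ u x)
    (hsol : IsWeakSol A b α (fun x => q x * g (u x)) Set.univ u)
    (x0 : Euc n) (hx0 : 0 < u x0) :
    ∃ (Φ : ℝ → ℝ) (I c ω R1 : ℝ), 0 < c ∧ 0 < ω ∧ 0 < R1 ∧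
      (∀ s t, R1 ≤ s → s ≤ t → Φ s ≤ Φ t) ∧ (∀ t, Φ t ≤ I) ∧
      ∀ R r, R1 ≤ R → R ≤ r → r ≤ (1 + 2 * ω) * R →
        Φ R + c * min (R * (R * fdef q b p α σ r) ^ (1 / (p - 1))) 1 ≤ Φ ((1 + 2 * ω) * R) := by
  have D := mkData n hn p C₁ C₂ α hp hC₁ hC₂ hα₁ hα₂ A hA b hbm hb0 hbloc q hqm hq0 hqloc g hg
    hg0 u hu hu0 hsol
  have hα : 0 < α := by linarith
  obtain ⟨M, hM⟩ := exists_M hn D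
  obtain ⟨K, hK1, hK⟩ := growth (n := n) hn (p := p) hC₁ hC₂
  obtain ⟨τ, κ, I, G, hτ, hτ1, hκ, hκ1, hGm, hG0, hGI, hG⟩ :=
    Gexists hg hgpos hθ hp hα h1 h2 hx0
  set ω := (σ - 1) / (2 * (σ + 2)) with hω_def
  have hω : 0 < ω := div_pos (by linarith) (by linarith)
  have hωσ : ω * (2 * (σ + 2)) = σ - 1 := by
    rw [hω_def]; field_simp
  obtain ⟨c, hc, hstep⟩ := step_calc hp hα₁ hα₂ hC₁ hK1 hτ hκ hκ1 hω
  have hMm : ∀ s t, 0 < s → s ≤ t → M s ≤ M t := by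
    intro s t hs hst
    obtain ⟨z, hz, hzM⟩ := (hM s hs).2
    rw [← hzM]
    exact (hM t (by linarith)).1 z (by linarith)
  refine ⟨fun r => G (M r), I, c * ω, ω, max 1 ‖x0‖, by positivity, hω, by positivity, ?_,
    fun t => hGI _, ?_⟩
  · intro s t hs hst
    exact hGm _ _ (hMm s t (lt_of_lt_of_le (by positivity) hs) hst)
  intro R r hR hRr hrR
  have hR0 : 0 < R := lt_of_lt_of_le (by positivity) hR
  have hr0 : 0 < r := by linarith
  have hMx : ∀ s, R ≤ s → u x0 ≤ M s := fun s hs =>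
    (hM s (by linarith)).1 x0 ((le_max_right _ _).trans (hR.trans hs))
  have he : 0 < (p - 1) / α := div_pos (by linarith) hα
  obtain ⟨hQ0, hQae, -, -, -⟩ := ess_facts hn hσ hr0 hq0 hqloc
  obtain ⟨-, -, hβ0, hβae, -⟩ := ess_facts hn hσ hr0 (f := fun x => b x ^ ((p - 1) / α))
    (fun x => Real.rpow_nonneg (hb0 x) _) (hbloc.rpow hb0 he.le)
  unfold fdef qinf
  set Q := essInf q (volume.restrict (Ann n (r / σ) (σ * r))) with hQdef
  set β := essSup (fun x => b x ^ ((p - 1) / α)) (volume.restrict (Ann n (r / σ) (σ * r)))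
    with hβdef
  have hp1 : 0 < 1 / (p - 1) := by apply one_div_pos.2; linarith
  rcases hQ0.eq_or_lt with hQ | hQ
  · rw [← hQ]
    simp only [zero_div, mul_zero]
    rw [Real.zero_rpow hp1.ne', mul_zero, min_eq_left zero_le_one, mul_zero, add_zero]
    exact hGm _ _ (hMm _ _ hR0 (by nlinarith))
  set T := R * (R * (Q / (1 + R * Q ^ ((α - p + 1) / α) * β))) ^ (1 / (p - 1)) with hT
  have hTle : R * (R * (Q / (1 + r * Q ^ ((α - p + 1) / α) * β))) ^ (1 / (p - 1)) ≤ T := by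
    rw [hT]
    gcongr
  have hT0 : 0 ≤ T := by rw [hT]; positivity
  have hBall : ∀ z : Euc n, ∀ ρ, R ≤ ‖z‖ → ‖z‖ ≤ R + ω * R → ρ ≤ ω * R → ∀ x ∈ ball z ρ,
      x ∈ Ann n (r / σ) (σ * r) := by
    intro z ρ hz1 hz2 hρ x hx
    rw [mem_ball, dist_eq_norm] at hx
    have h3 := norm_sub_norm_le x z
    have h4 := norm_sub_norm_le z x
    rw [norm_sub_rev] at h4
    constructor
    · rw [div_lt_iff₀ (by linarith)]
      have : (1 - ω) * R < ‖x‖ := by linarith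
      have : (1 - ω) * R * σ < ‖x‖ * σ := mul_lt_mul_of_pos_right this (by linarith)
      have : (1 + 2 * ω) * R ≤ (1 - ω) * R * σ := by nlinarith
      linarith
    · have h5 : ‖x‖ < (1 + 2 * ω) * R := by linarith
      have : (1 + 2 * ω) * R ≤ σ * R := by nlinarith
      nlinarith
  have hsup := supArg (Φ := fun r => G (M r)) (R := R) (l := ω * R) (c := c * min T 1 / R)
    (by positivity) (fun s t hs hst => hGm _ _ (hMm s t (by linarith) hst)) ?_ (by positivity)
  · have e1 : R + 2 * (ω * R) = (1 + 2 * ω) * R := by ring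
    have e2 : c * min T 1 / R * (ω * R) = c * ω * min T 1 := by field_simp
    rw [e1, e2] at hsup
    refine le_trans ?_ hsup
    gcongr
  intro s hs1 hs2
  have hs0 : 0 < s := by linarith
  have hMs := hMx s hs1
  obtain ⟨H, hκH, hgH, hGH⟩ := hG (M s) hMs
  obtain ⟨ρ, δ, hρ, hρR, hδ, hδM, hc1, hc2, hc3⟩ :=
    hstep R Q β (M s) H hR0 hQ hβ0 (by linarith) hκH
  obtain ⟨z, hz, hzM⟩ := (hM s hs0).2
  have hsubA := hBall z ρ (by rw [hz]; exact hs1) (by rw [hz]; exact hs2) hρR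
  obtain ⟨y, hy, hyu⟩ := step_one (q := q) (g := g) (b := b) hq0 (hK α _ b _ u D) hzM hδ hρ hδM
    (B := β ^ (α / (p - 1))) (Q := Q) (H := H) (by positivity) hQ.le (by linarith)
    (by
      filter_upwards [hβae] with x hx hxb
      have h3 := hx (hsubA x hxb)
      have h4 := Real.rpow_le_rpow (Real.rpow_nonneg (hb0 x) _) h3
        (show 0 ≤ α / (p - 1) from div_nonneg hα.le (by linarith))
      rw [← Real.rpow_mul (hb0 x)] at h4
      have h5 : (p - 1) / α * (α / (p - 1)) = 1 := by
        have : p - 1 ≠ 0 := by linarith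
        field_simp
      rwa [h5, Real.rpow_one] at h4)
    (by filter_upwards [hQae] with x hx hxb using hx (hsubA x hxb)) hgH hc1 hc2
  refine ⟨ρ, hρ, hρR, ?_⟩
  have h6 : M s + δ ≤ M (s + ρ) := by
    refine hyu.le.trans ((hM (s + ρ) (by linarith)).1 y ?_)
    rw [mem_ball, dist_eq_norm] at hy
    have := norm_sub_norm_le y z
    linarith
  have h7 := hGH δ hδ hδM
  have h8 := hGm _ _ h6
  have e3 : c * min T 1 / R * ρ = c * (ρ / R) * min T 1 := by ring
  show G (M s) + _ ≤ G (M (s + ρ))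
  rw [e3]
  linarith

lemma final_int {Φ f : ℝ → ℝ} {I c ω R1 r0 e : ℝ} (he : 0 < e) (hc : 0 < c) (hω : 0 < ω)
    (hR1 : 0 < R1) (hr0 : 0 < r0)
    (hm : ∀ s t, R1 ≤ s → s ≤ t → Φ s ≤ Φ t) (hI : ∀ t, Φ t ≤ I)
    (hf0 : ∀ r, 0 < r → 0 ≤ f r) (hfb : ∀ R, ∃ C, ∀ r ∈ Ioc r0 R, f r ≤ C)
    (hsh : ∀ R r, R1 ≤ R → R ≤ r → r ≤ (1 + 2 * ω) * R →
      Φ R + c * min (R * (R * f r) ^ e) 1 ≤ Φ ((1 + 2 * ω) * R)) :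
    (∫⁻ r in Ioi r0, ENNReal.ofReal ((r * f r) ^ e)) < ⊤ := by
  set l := 1 + 2 * ω with hl
  have hl1 : 1 < l := by linarith
  obtain ⟨R0, hR0, hR0r, hsmall⟩ : ∃ R0, R1 ≤ R0 ∧ r0 ≤ R0 ∧ ∀ r, R0 ≤ r → Φ r < Φ R0 + c := by
    have hb : BddAbove (Φ '' Ici R1) := ⟨I, by rintro _ ⟨t, _, rfl⟩; exact hI t⟩
    obtain ⟨_, ⟨t, ht, rfl⟩, ht'⟩ := exists_lt_of_lt_csSup
      (show (Φ '' Ici R1).Nonempty from ⟨Φ R1, R1, self_mem_Ici, rfl⟩)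
      (show sSup (Φ '' Ici R1) - c < sSup (Φ '' Ici R1) by linarith)
    refine ⟨max t r0, le_max_of_le_left ht, le_max_right _ _, fun r hr => ?_⟩
    have h1 := hm t (max t r0) ht (le_max_left _ _)
    have h2 : Φ r ≤ sSup (Φ '' Ici R1) :=
      le_csSup hb ⟨r, (le_max_of_le_left ht).trans hr, rfl⟩
    linarith
  have hR0' : 0 < R0 := by linarith
  set C := 2 * ω * l ^ e / c with hC
  have hC0 : 0 ≤ C := by rw [hC]; positivity
  have hshell : ∀ R, R0 ≤ R →
      (∫⁻ r in Ioc R (l * R), ENNReal.ofReal ((r * f r) ^ e)) ≤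
        ENNReal.ofReal (C * (Φ (l * R) - Φ R)) := by
    intro R hR
    have hRp : 0 < R := by linarith
    have hRl : R ≤ l * R := by nlinarith
    have hΔ : Φ R ≤ Φ (l * R) := hm _ _ (hR0.trans hR) hRl
    have hpt : ∀ r ∈ Ioc R (l * R),
        ENNReal.ofReal ((r * f r) ^ e) ≤ ENNReal.ofReal (l ^ e / (c * R) * (Φ (l * R) - Φ R)) := by
      intro r hr
      have hrp : 0 < r := hRp.trans hr.1
      have hfr := hf0 r hrp
      apply ENNReal.ofReal_le_ofReal
      have h3 := hsh R r (hR0.trans hR) hr.1.le hr.2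
      have h4 := hsmall (l * R) (hR.trans hRl)
      have h5 := hm R0 R hR0 hR
      have h6 : min (R * (R * f r) ^ e) 1 < 1 := by
        have : c * min (R * (R * f r) ^ e) 1 < c * 1 := by linarith
        exact lt_of_mul_lt_mul_left this hc.le
      have h7 : min (R * (R * f r) ^ e) 1 = R * (R * f r) ^ e := by
        apply min_eq_left
        by_contra h
        push Not at h
        rw [min_eq_right h.le] at h6
        exact lt_irrefl _ h6
      rw [h7] at h3
      have h8 : (r * f r) ^ e ≤ l ^ e * (R * f r) ^ e := by
        rw [← Real.mul_rpow (by positivity) (by positivity)]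
        apply Real.rpow_le_rpow (by positivity) _ he.le
        rw [← mul_assoc]
        exact mul_le_mul_of_nonneg_right hr.2 hfr
      refine h8.trans ?_
      have h9 : (R * f r) ^ e ≤ (Φ (l * R) - Φ R) / (c * R) := by
        rw [le_div_iff₀ (by positivity)]
        nlinarith
      calc l ^ e * (R * f r) ^ e ≤ l ^ e * ((Φ (l * R) - Φ R) / (c * R)) := by gcongr
        _ = _ := by ring
    calc (∫⁻ r in Ioc R (l * R), ENNReal.ofReal ((r * f r) ^ e))
        ≤ ∫⁻ r in Ioc R (l * R), ENNReal.ofReal (l ^ e / (c * R) * (Φ (l * R) - Φ R)) :=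
          setLIntegral_mono measurable_const hpt
      _ = ENNReal.ofReal (l ^ e / (c * R) * (Φ (l * R) - Φ R)) * ENNReal.ofReal (l * R - R) := by
          rw [setLIntegral_const, Real.volume_Ioc]
      _ = ENNReal.ofReal (C * (Φ (l * R) - Φ R)) := by
          rw [← ENNReal.ofReal_mul' (by linarith)]
          congr 1
          rw [hC, hl]; field_simp; ring
      _ ≤ _ := le_rfl
  have hind : ∀ k : ℕ, R0 ≤ l ^ k * R0 ∧
      (∫⁻ r in Ioc R0 (l ^ k * R0), ENNReal.ofReal ((r * f r) ^ e)) ≤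
        ENNReal.ofReal (C * (Φ (l ^ k * R0) - Φ R0)) := by
    intro k
    induction k with
    | zero => simp
    | succ k ih =>
      have e1 : l ^ (k + 1) * R0 = l * (l ^ k * R0) := by ring
      rw [e1]
      set R := l ^ k * R0 with hR
      have hRl : R ≤ l * R := by nlinarith [ih.1]
      refine ⟨ih.1.trans hRl, ?_⟩
      rw [← Ioc_union_Ioc_eq_Ioc ih.1 hRl]
      refine (lintegral_union_le _ _ _).trans ((add_le_add ih.2 (hshell R ih.1)).trans ?_)
      have h1 := hm R0 R hR0 ih.1
      have h2 := hm R (l * R) (hR0.trans ih.1) hRl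
      rw [← ENNReal.ofReal_add (mul_nonneg hC0 (by linarith)) (mul_nonneg hC0 (by linarith))]
      apply ENNReal.ofReal_le_ofReal
      apply le_of_eq; ring
  have hU : Ioi R0 = ⋃ k : ℕ, Ioc R0 (l ^ k * R0) := by
    ext x
    simp only [mem_Ioi, mem_iUnion, mem_Ioc]
    refine ⟨fun h => ?_, fun ⟨k, h, _⟩ => h⟩
    obtain ⟨k, hk⟩ := pow_unbounded_of_one_lt (x / R0) hl1
    exact ⟨k, h, ((div_lt_iff₀ hR0').1 hk).le⟩
  have hmonoS : Monotone fun k : ℕ => Ioc R0 (l ^ k * R0) := by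
    intro i j hij
    apply Ioc_subset_Ioc_right
    exact mul_le_mul_of_nonneg_right (pow_le_pow_right₀ hl1.le hij) hR0'.le
  have htail : (∫⁻ r in Ioi R0, ENNReal.ofReal ((r * f r) ^ e)) < ⊤ := by
    rw [hU, setLIntegral_iUnion_of_directed _ hmonoS.directed_le]
    refine lt_of_le_of_lt (iSup_le fun k => (hind k).2.trans ?_)
      (ENNReal.ofReal_lt_top (r := C * (I - Φ R0)))
    apply ENNReal.ofReal_le_ofReal
    apply mul_le_mul_of_nonneg_left _ hC0
    linarith [hI (l ^ k * R0)]
  have hhead : (∫⁻ r in Ioc r0 R0, ENNReal.ofReal ((r * f r) ^ e)) < ⊤ := by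
    obtain ⟨B, hB⟩ := hfb R0
    have : ∀ r ∈ Ioc r0 R0, ENNReal.ofReal ((r * f r) ^ e) ≤ ENNReal.ofReal ((R0 * B) ^ e) := by
      intro r hr
      have hrp : 0 < r := hr0.trans hr.1
      have := hf0 r hrp
      apply ENNReal.ofReal_le_ofReal
      apply Real.rpow_le_rpow (by positivity) _ he.le
      exact mul_le_mul hr.2 (hB r hr) this hR0'.le
    refine (setLIntegral_mono measurable_const this).trans_lt ?_
    rw [setLIntegral_const, Real.volume_Ioc]
    exact ENNReal.mul_lt_top ENNReal.ofReal_lt_top ENNReal.ofReal_lt_top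
  rw [← Ioc_union_Ioi_eq_Ioi hR0r]
  exact (lintegral_union_le _ _ _).trans_lt (ENNReal.add_lt_top.2 ⟨hhead, htail⟩)

/-- Theorem 2.1 (blow-up / Liouville): under the convergence conditions on `g_θ` and the
divergence condition on `f_σ`, every nonnegative solution of
`div A(x,Du) + b(x)|Du|^α ≥ q(x) g(u)` in `ℝⁿ` is identically zero. -/
theorem stmt_0 (n : ℕ) (hn : 2 ≤ n) (p C₁ C₂ α : ℝ) (hp : 1 < p)
    (hC₁ : 0 < C₁) (hC₂ : 0 < C₂) (hα₁ : p - 1 ≤ α) (hα₂ : α ≤ p)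
    (A : Euc n → Euc n → Euc n) (hA : StructCond A p C₁ C₂)
    (b : Euc n → ℝ) (hbm : Measurable b) (hb0 : ∀ x, 0 ≤ b x) (hbloc : LocBdd b)
    (q : Euc n → ℝ) (hqm : Measurable q) (hq0 : ∀ x, 0 ≤ q x) (hqloc : LocBdd q)
    (g : ℝ → ℝ) (hg : ContinuousOn g (Set.Ici 0)) (hg0 : ∀ t ∈ Set.Ici (0 : ℝ), 0 ≤ g t)
    (hgpos : ∀ t : ℝ, 0 < t → 0 < g t)
    (θ σ r₀ : ℝ) (hθ : 1 < θ) (hσ : 1 < σ) (hr₀ : 0 < r₀)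
    (h1 : (∫⁻ t in Set.Ioi (1 : ℝ), ENNReal.ofReal ((ginf g θ t * t) ^ (-(1 / p)))) < ⊤)
    (h2 : (∫⁻ t in Set.Ioi (1 : ℝ), ENNReal.ofReal (ginf g θ t ^ (-(1 / α)))) < ⊤)
    (h3 : (∫⁻ r in Set.Ioi r₀, ENNReal.ofReal ((r * fdef q b p α σ r) ^ (1 / (p - 1)))) = ⊤)
    (u : Euc n → ℝ) (hu : ContDiff ℝ 1 u) (hu0 : ∀ x, 0 ≤ u x)
    (hsol : IsWeakSol A b α (fun x => q x * g (u x)) Set.univ u) :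
    ∀ x, u x = 0 := by
  intro x0
  by_contra hne
  have hx0 : 0 < u x0 := lt_of_le_of_ne (hu0 x0) (Ne.symm hne)
  obtain ⟨Φ, I, c, ω, R1, hc, hω, hR1, hm, hI, hsh⟩ :=
    shell_main n hn p C₁ C₂ α hp hC₁ hC₂ hα₁ hα₂ A hA b hbm hb0 hbloc q hqm hq0 hqloc g hg hg0
      hgpos θ σ hθ hσ h1 h2 u hu hu0 hsol x0 hx0
  have hα : 0 < α := by linarith
  have he : 0 < (p - 1) / α := div_pos (by linarith) hα
  have hfacts : ∀ r, 0 < r → 0 ≤ fdef q b p α σ r ∧ fdef q b p α σ r ≤ qinf q σ r := by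
    intro r hr
    obtain ⟨hQ0, -, -, -, -⟩ := ess_facts hn hσ hr hq0 hqloc
    obtain ⟨-, -, hβ0, -, -⟩ := ess_facts hn hσ hr (f := fun x => b x ^ ((p - 1) / α))
      (fun x => Real.rpow_nonneg (hb0 x) _) (hbloc.rpow hb0 he.le)
    have hQ0' : 0 ≤ qinf q σ r := hQ0
    unfold fdef
    refine ⟨by positivity, div_le_self hQ0' ?_⟩
    have : 0 ≤ r * qinf q σ r ^ ((α - p + 1) / α) * essSup (fun x => b x ^ ((p - 1) / α))
      (volume.restrict (Ann n (r / σ) (σ * r))) := by positivity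
    linarith
  have hfin := final_int (f := fdef q b p α σ) (e := 1 / (p - 1)) (r0 := r₀)
    (one_div_pos.2 (by linarith)) hc hω hR1 hr₀ hm hI (fun r hr => (hfacts r hr).1) ?_ hsh
  · exact absurd h3 hfin.ne
  · intro R
    obtain ⟨C, hC⟩ := hqloc _ (isCompact_closedBall (0 : Euc n) (σ * R))
    refine ⟨C, fun r hr => ?_⟩
    have hr0 : 0 < r := hr₀.trans hr.1
    refine (hfacts r hr0).2.trans ?_
    obtain ⟨-, -, -, -, hQ⟩ := ess_facts hn hσ hr0 hq0 hqloc
    apply hQ C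
    intro x hx
    apply hC
    apply closedBall_subset_closedBall _ hx
    have := hr.2
    nlinarith
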